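/- arXiv:1908.04543 — 2 statements merged into one kernel-verified Lean document; each statement's English description precedes it below -/
import Mathlib

section
/- Let μ > 0. The operator A_μ on L²((0,∞)) defined by (A_μφ)(t) = ∫₀^∞ (t·u / ((t+μ²)(t+u+μ²)(u+μ²))) φ(u) du is a bounded, self-adjoint, positive operator, and its operator norm equals π. -/
open MeasureTheory Real Set
open scoped RealInnerProductSpace

/-!
With `m = μ²`, the identity `1 / (t + u + m) = ∫₀^∞ e^{-s (t + u + m)} ds` factorises `A_μ` as
`L† L`, where `L` has the kernel `e^{-s (t + m / 2)} t / (t + m)`. So `A_μ` is self-adjoint and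
positive, and it remains to see that `‖L‖ = √π`.

The kernel of `L` is dominated by the Laplace kernel `e^{-st}`. Since
`∫₀^∞ e^{-st} t^{-1/2} dt = Γ(1/2) s^{-1/2}`, the Schur test with weight `t^{-1/2}` bounds both
operators by `Γ(1/2) = √π`. Dampings of `t^{-1/2}` are approximate eigenfunctions of the Laplace
transform, which therefore has no smaller bound. Finally, unitary dilations turn `L` into the
same operator with `m / a` in place of `m`; letting `a → ∞`, Fatou's lemma carries any bound for
`L` over to the Laplace transform.
-/

open Filter Function ContinuousLinearMap
open scoped ENNReal NNReal ComplexConjugate Topology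

section KernelBound

variable {α β : Type*} [MeasurableSpace α] [MeasurableSpace β] {μ : Measure α} {ν : Measure β}

theorem eLpNorm_two_sq {E : Type*} [ENorm E] (f : α → E) :
    eLpNorm f 2 μ ^ 2 = ∫⁻ x, ‖f x‖ₑ ^ 2 ∂μ := by
  simpa using eLpNorm_nnreal_pow_eq_lintegral (μ := μ) (f := f) (p := 2) two_ne_zero

theorem lintegral_enorm_sq_coeFn {E : Type*} [NormedAddCommGroup E] (f : Lp E 2 μ) :
    ∫⁻ x, ‖f x‖ₑ ^ 2 ∂μ = ‖f‖ₑ ^ 2 := by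
  rw [Lp.enorm_def, eLpNorm_two_sq]

theorem lintegral_enorm_sq_coeFn_ne_top {E : Type*} [NormedAddCommGroup E] (f : Lp E 2 μ) :
    ∫⁻ x, ‖f x‖ₑ ^ 2 ∂μ ≠ ∞ := by
  rw [lintegral_enorm_sq_coeFn]
  finiteness

theorem sq_lintegral_le_of_sq_eq_mul {h F G : α → ℝ≥0∞} (hF : AEMeasurable F μ)
    (hG : AEMeasurable G μ) (hFG : ∀ᵐ x ∂μ, h x ^ 2 = F x * G x) :
    (∫⁻ x, h x ∂μ) ^ 2 ≤ (∫⁻ x, F x ∂μ) * ∫⁻ x, G x ∂μ := by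
  have sqrt_sq (a : ℝ≥0∞) : (a ^ 2) ^ (1 / 2 : ℝ) = a := by
    rw [← ENNReal.rpow_natCast, ← ENNReal.rpow_mul]; norm_num
  have sq_sqrt (a : ℝ≥0∞) : (a ^ (1 / 2 : ℝ)) ^ 2 = a := by
    rw [← ENNReal.rpow_natCast, ← ENNReal.rpow_mul]; norm_num
  calc (∫⁻ x, h x ∂μ) ^ 2
      = (∫⁻ x, F x ^ (1 / 2 : ℝ) * G x ^ (1 / 2 : ℝ) ∂μ) ^ 2 := by
        congr 1
        refine lintegral_congr_ae (hFG.mono fun x hx => ?_)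
        simp only [← ENNReal.mul_rpow_of_nonneg _ _ one_half_pos.le, ← hx, sqrt_sq]
    _ ≤ ((∫⁻ x, F x ∂μ) ^ (1 / 2 : ℝ) * (∫⁻ x, G x ∂μ) ^ (1 / 2 : ℝ)) ^ 2 := by
        gcongr
        exact ENNReal.lintegral_mul_norm_pow_le hF hG one_half_pos.le one_half_pos.le
          (add_halves 1)
    _ = (∫⁻ x, F x ∂μ) * ∫⁻ x, G x ∂μ := by rw [mul_pow, sq_sqrt, sq_sqrt]

theorem sq_lintegral_mul_le_weighted {a f q : α → ℝ≥0∞} (ha : Measurable a) (hf : Measurable f)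
    (hq : Measurable q) (hq0 : ∀ᵐ x ∂μ, q x ≠ 0) (hqt : ∀ᵐ x ∂μ, q x ≠ ∞) :
    (∫⁻ x, a x * f x ∂μ) ^ 2 ≤ (∫⁻ x, a x * q x ∂μ) * ∫⁻ x, a x * (f x ^ 2 * (q x)⁻¹) ∂μ := by
  refine sq_lintegral_le_of_sq_eq_mul (ha.mul hq).aemeasurable
    (ha.mul ((hf.pow_const 2).mul hq.inv)).aemeasurable ?_
  filter_upwards [hq0, hqt] with x hx0 hxt
  calc (a x * f x) ^ 2 = (a x * f x) ^ 2 * (q x * (q x)⁻¹) := by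
        rw [ENNReal.mul_inv_cancel hx0 hxt, mul_one]
    _ = a x * q x * (a x * (f x ^ 2 * (q x)⁻¹)) := by ring

/-- The integral operator with the nonnegative kernel `k` maps `L²(ν)` to `L²(μ)` with norm at
most `C`. Testing only on functions with values in `ℝ≥0∞` makes sense of the integrals without any
integrability assumption; for a signed kernel, `k` is its absolute value. -/
def HasL2Bound (k : α → β → ℝ≥0∞) (C : ℝ≥0) (μ : Measure α) (ν : Measure β) : Prop :=
  ∀ ⦃f : β → ℝ≥0∞⦄, Measurable f → ∫⁻ y, f y ^ 2 ∂ν ≠ ∞ →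
    ∫⁻ x, (∫⁻ y, k x y * f y ∂ν) ^ 2 ∂μ ≤ C ^ 2 * ∫⁻ y, f y ^ 2 ∂ν

namespace HasL2Bound

variable {k : α → β → ℝ≥0∞} {C : ℝ≥0}

theorem mono {k' : α → β → ℝ≥0∞} (h : HasL2Bound k C μ ν)
    (hle : ∀ᵐ x ∂μ, ∀ᵐ y ∂ν, k' x y ≤ k x y) : HasL2Bound k' C μ ν := by
  intro f hf hf2
  refine le_trans (lintegral_mono_ae ?_) (h hf hf2)
  filter_upwards [hle] with x hx
  gcongr ?_ ^ 2
  exact lintegral_mono_ae (hx.mono fun y hy => mul_le_mul_left hy _)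

theorem lintegral_sq_ne_top (h : HasL2Bound k C μ ν) {f : β → ℝ≥0∞} (hf : Measurable f)
    (hf2 : ∫⁻ y, f y ^ 2 ∂ν ≠ ∞) : ∫⁻ x, (∫⁻ y, k x y * f y ∂ν) ^ 2 ∂μ ≠ ∞ :=
  ne_top_of_le_ne_top (by finiteness) (h hf hf2)

theorem ae_lintegral_lt_top [SFinite ν] (h : HasL2Bound k C μ ν) (hk : Measurable (uncurry k))
    {f : β → ℝ≥0∞} (hf : Measurable f) (hf2 : ∫⁻ y, f y ^ 2 ∂ν ≠ ∞) :
    ∀ᵐ x ∂μ, ∫⁻ y, k x y * f y ∂ν < ∞ := by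
  have hmeas : Measurable fun x => (∫⁻ y, k x y * f y ∂ν) ^ 2 :=
    (hk.mul (hf.comp measurable_snd)).lintegral_prod_right.pow_const 2
  filter_upwards [ae_lt_top hmeas (h.lintegral_sq_ne_top hf hf2)] with x hx
  simpa using hx

theorem of_tendsto [SFinite ν] {ι : Type*} {l : Filter ι} [l.NeBot] [l.IsCountablyGenerated]
    {K : ι → α → β → ℝ≥0∞} (hK : ∀ i, Measurable (uncurry (K i)))
    (h : ∀ᶠ i in l, HasL2Bound (K i) C μ ν)
    (hlim : ∀ᵐ x ∂μ, ∀ᵐ y ∂ν, Tendsto (fun i => K i x y) l (𝓝 (k x y))) :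
    HasL2Bound k C μ ν := by
  intro f hf hf2
  have hmeas (i : ι) : Measurable (uncurry fun x y => K i x y * f y) :=
    (hK i).mul (hf.comp measurable_snd)
  have inner_le : ∀ᵐ x ∂μ, ∫⁻ y, k x y * f y ∂ν ≤ liminf (fun i => ∫⁻ y, K i x y * f y ∂ν) l := by
    filter_upwards [hlim] with x hx
    refine le_trans (lintegral_mono_ae ?_) (lintegral_liminf_le fun i => (hmeas i).of_uncurry_left)
    filter_upwards [hx] with y hy
    calc k x y * f y = liminf (fun i => K i x y) l * liminf (fun _ => f y) l := by
          rw [hy.liminf_eq, liminf_const]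
      _ ≤ liminf (fun i => K i x y * f y) l := ENNReal.le_liminf_mul
  calc ∫⁻ x, (∫⁻ y, k x y * f y ∂ν) ^ 2 ∂μ
      ≤ ∫⁻ x, liminf (fun i => (∫⁻ y, K i x y * f y ∂ν) ^ 2) l ∂μ := by
        refine lintegral_mono_ae ?_
        filter_upwards [inner_le] with x hx
        refine (pow_le_pow_left₀ zero_le hx 2).trans ?_
        simp only [pow_two]
        exact ENNReal.le_liminf_mul
    _ ≤ liminf (fun i => ∫⁻ x, (∫⁻ y, K i x y * f y ∂ν) ^ 2 ∂μ) l :=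
        lintegral_liminf_le fun i => (hmeas i).lintegral_prod_right.pow_const 2
    _ ≤ C ^ 2 * ∫⁻ y, f y ^ 2 ∂ν :=
        liminf_le_of_frequently_le' (h.mono fun i hi => hi hf hf2).frequently

theorem of_schur [SFinite μ] [SFinite ν] (hk : Measurable (uncurry k)) {p : α → ℝ≥0∞}
    {q : β → ℝ≥0∞} (hp : Measurable p) (hq : Measurable q) (hq0 : ∀ᵐ y ∂ν, q y ≠ 0)
    (hqt : ∀ᵐ y ∂ν, q y ≠ ∞) (hrow : ∀ᵐ x ∂μ, ∫⁻ y, k x y * q y ∂ν ≤ C * p x)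
    (hcol : ∀ᵐ y ∂ν, ∫⁻ x, k x y * p x ∂μ ≤ C * q y) : HasL2Bound k C μ ν := by
  intro f hf _
  set g : β → ℝ≥0∞ := fun y => f y ^ 2 * (q y)⁻¹
  have hg : Measurable g := (hf.pow_const 2).mul hq.inv
  have cauchy_schwarz : ∀ᵐ x ∂μ,
      (∫⁻ y, k x y * f y ∂ν) ^ 2 ≤ C * p x * ∫⁻ y, k x y * g y ∂ν := by
    filter_upwards [hrow] with x hx
    exact (sq_lintegral_mul_le_weighted hk.of_uncurry_left hf hq hq0 hqt).trans
      (mul_le_mul_left hx _)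
  calc ∫⁻ x, (∫⁻ y, k x y * f y ∂ν) ^ 2 ∂μ
      ≤ ∫⁻ x, C * p x * ∫⁻ y, k x y * g y ∂ν ∂μ := lintegral_mono_ae cauchy_schwarz
    _ = ∫⁻ x, ∫⁻ y, C * g y * (k x y * p x) ∂ν ∂μ := by
        congr with x
        have hkg : Measurable fun y => k x y * g y := hk.of_uncurry_left.mul hg
        rw [← lintegral_const_mul _ hkg]
        congr with y
        ring
    _ = ∫⁻ y, C * g y * ∫⁻ x, k x y * p x ∂μ ∂ν := by
        rw [lintegral_lintegral_swap]
        · congr with y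
          exact lintegral_const_mul _ (hk.of_uncurry_right.mul hp)
        · exact (((hg.comp measurable_snd).const_mul _).mul
            (hk.mul (hp.comp measurable_fst))).aemeasurable
    _ ≤ ∫⁻ y, C ^ 2 * f y ^ 2 ∂ν := by
        refine lintegral_mono_ae ?_
        filter_upwards [hcol, hq0, hqt] with y hy hy0 hyt
        calc C * g y * ∫⁻ x, k x y * p x ∂μ ≤ C * g y * (C * q y) := by gcongr
          _ = C ^ 2 * f y ^ 2 * (q y * (q y)⁻¹) := by ring
          _ = C ^ 2 * f y ^ 2 := by rw [ENNReal.mul_inv_cancel hy0 hyt, mul_one]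
    _ = C ^ 2 * ∫⁻ y, f y ^ 2 ∂ν := lintegral_const_mul _ (hf.pow_const 2)

theorem le_of_subeigenfunction {k : α → α → ℝ≥0∞} (h : HasL2Bound k C μ μ) {c : ℝ≥0∞}
    {f : α → ℝ≥0∞} (hf : Measurable f) (hf0 : ∫⁻ x, f x ^ 2 ∂μ ≠ 0)
    (hft : ∫⁻ x, f x ^ 2 ∂μ ≠ ∞) (hsub : ∀ᵐ x ∂μ, c * f x ≤ ∫⁻ y, k x y * f y ∂μ) : c ≤ C := by
  have sq_le : c ^ 2 * ∫⁻ x, f x ^ 2 ∂μ ≤ C ^ 2 * ∫⁻ x, f x ^ 2 ∂μ := calc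
    c ^ 2 * ∫⁻ x, f x ^ 2 ∂μ = ∫⁻ x, (c * f x) ^ 2 ∂μ := by
        simp only [mul_pow, lintegral_const_mul _ (hf.pow_const 2)]
    _ ≤ ∫⁻ x, (∫⁻ y, k x y * f y ∂μ) ^ 2 ∂μ :=
        lintegral_mono_ae (hsub.mono fun x hx => pow_le_pow_left₀ zero_le hx 2)
    _ ≤ C ^ 2 * ∫⁻ x, f x ^ 2 ∂μ := h hf hft
  exact (ENNReal.pow_le_pow_left_iff two_ne_zero).1 ((ENNReal.mul_le_mul_iff_left hf0 hft).1 sq_le)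

end HasL2Bound

end KernelBound

section KernelOperator

variable {α β γ : Type*} [MeasurableSpace α] [MeasurableSpace β] [MeasurableSpace γ]
  {μ : Measure α} {ν : Measure β} {ρ : Measure γ} {𝕜 : Type*} [RCLike 𝕜]
  {k : α → β → 𝕜} {C : ℝ≥0}

namespace HasL2Bound

theorem eLpNorm_integral_le (h : HasL2Bound (fun x y => ‖k x y‖ₑ) C μ ν) (f : Lp 𝕜 2 ν) :
    eLpNorm (fun x => ∫ y, k x y * f y ∂ν) 2 μ ≤ C * ‖f‖ₑ := by
  refine (ENNReal.pow_le_pow_left_iff two_ne_zero).1 ?_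
  calc eLpNorm (fun x => ∫ y, k x y * f y ∂ν) 2 μ ^ 2
      = ∫⁻ x, ‖∫ y, k x y * f y ∂ν‖ₑ ^ 2 ∂μ := eLpNorm_two_sq _
    _ ≤ ∫⁻ x, (∫⁻ y, ‖k x y‖ₑ * ‖f y‖ₑ ∂ν) ^ 2 ∂μ := by
        gcongr with x
        simpa only [enorm_mul] using enorm_integral_le_lintegral_enorm fun y => k x y * f y
    _ ≤ C ^ 2 * ∫⁻ y, ‖f y‖ₑ ^ 2 ∂ν :=
        h (Lp.stronglyMeasurable f).measurable.enorm (lintegral_enorm_sq_coeFn_ne_top f)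
    _ = (C * ‖f‖ₑ) ^ 2 := by rw [lintegral_enorm_sq_coeFn, mul_pow]

variable [SFinite ν]

theorem ae_integrable_mul (hk : Measurable (uncurry k))
    (h : HasL2Bound (fun x y => ‖k x y‖ₑ) C μ ν) (f : Lp 𝕜 2 ν) :
    ∀ᵐ x ∂μ, Integrable (fun y => k x y * f y) ν := by
  have hf := (Lp.stronglyMeasurable f).measurable
  filter_upwards [h.ae_lintegral_lt_top hk.enorm hf.enorm (lintegral_enorm_sq_coeFn_ne_top f)]
    with x hx
  exact ⟨(hk.of_uncurry_left.mul hf).aestronglyMeasurable, by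
    simpa only [HasFiniteIntegral, enorm_mul] using hx⟩

theorem memLp_integral (hk : Measurable (uncurry k))
    (h : HasL2Bound (fun x y => ‖k x y‖ₑ) C μ ν) (f : Lp 𝕜 2 ν) :
    MemLp (fun x => ∫ y, k x y * f y ∂ν) 2 μ := by
  refine ⟨StronglyMeasurable.aestronglyMeasurable ?_,
    (h.eLpNorm_integral_le f).trans_lt (by finiteness)⟩
  have hkf : Measurable (uncurry fun x y => k x y * f y) :=
    hk.mul ((Lp.stronglyMeasurable f).measurable.comp measurable_snd)
  exact hkf.stronglyMeasurable.integral_prod_right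

theorem norm_toLp_integral_le (hk : Measurable (uncurry k))
    (h : HasL2Bound (fun x y => ‖k x y‖ₑ) C μ ν) (f : Lp 𝕜 2 ν) :
    ‖(h.memLp_integral hk f).toLp _‖ ≤ C * ‖f‖ := by
  rw [Lp.norm_toLp]
  exact (ENNReal.toReal_mono (by finiteness) (h.eLpNorm_integral_le f)).trans_eq (by simp)

theorem integrable_prod (hk : Measurable (uncurry k))
    (h : HasL2Bound (fun x y => ‖k x y‖ₑ) C μ ν) (f : Lp 𝕜 2 ν) (g : Lp 𝕜 2 μ) :
    Integrable (uncurry fun x y => k x y * f y * conj (g x)) (μ.prod ν) := by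
  have hf := (Lp.stronglyMeasurable f).measurable
  have hg := (Lp.stronglyMeasurable g).measurable
  have hmeas : Measurable (uncurry fun x y => k x y * f y * conj (g x)) :=
    (hk.mul (hf.comp measurable_snd)).mul
      (RCLike.continuous_conj.measurable.comp (hg.comp measurable_fst))
  refine ⟨hmeas.aestronglyMeasurable, ?_⟩
  have hkf : Measurable (uncurry fun x y => ‖k x y‖ₑ * ‖f y‖ₑ) :=
    hk.enorm.mul (hf.enorm.comp measurable_snd)
  set Kf : α → ℝ≥0∞ := fun x => ∫⁻ y, ‖k x y‖ₑ * ‖f y‖ₑ ∂ν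
  have hKf : Measurable Kf := hkf.lintegral_prod_right
  have cauchy_schwarz : (∫⁻ x, Kf x * ‖g x‖ₑ ∂μ) ^ 2
      ≤ (∫⁻ x, Kf x ^ 2 ∂μ) * ∫⁻ x, ‖g x‖ₑ ^ 2 ∂μ :=
    sq_lintegral_le_of_sq_eq_mul (hKf.pow_const 2).aemeasurable
      (hg.enorm.pow_const 2).aemeasurable (ae_of_all _ fun x => mul_pow _ _ 2)
  calc ∫⁻ p, ‖uncurry (fun x y => k x y * f y * conj (g x)) p‖ₑ ∂(μ.prod ν)
      = ∫⁻ x, ∫⁻ y, ‖k x y‖ₑ * ‖f y‖ₑ * ‖g x‖ₑ ∂ν ∂μ := by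
        rw [lintegral_prod _ hmeas.enorm.aemeasurable]
        simp only [uncurry_apply_pair, enorm_mul, RCLike.enorm_conj]
    _ = ∫⁻ x, Kf x * ‖g x‖ₑ ∂μ := by
        congr with x
        exact lintegral_mul_const _ hkf.of_uncurry_left
    _ < ∞ := by
        refine (ENNReal.pow_lt_top_iff.1 (cauchy_schwarz.trans_lt ?_)).resolve_right two_ne_zero
        exact ENNReal.mul_lt_top
          (h.lintegral_sq_ne_top hf.enorm (lintegral_enorm_sq_coeFn_ne_top f)).lt_top
          (lintegral_enorm_sq_coeFn_ne_top g).lt_top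

end HasL2Bound

variable [SFinite ν]

/-- The bounded operator `L²(ν) → L²(μ)` with integral kernel `k`, that is
`(K f)(x) = ∫ k(x, y) f(y) dν(y)` for almost every `x`. -/
noncomputable def kernelOperator (hk : Measurable (uncurry k))
    (h : HasL2Bound (fun x y => ‖k x y‖ₑ) C μ ν) : Lp 𝕜 2 ν →L[𝕜] Lp 𝕜 2 μ :=
  LinearMap.mkContinuous
    { toFun := fun f => (h.memLp_integral hk f).toLp _
      map_add' := fun f g => by
        rw [← MemLp.toLp_add, MemLp.toLp_eq_toLp_iff]
        filter_upwards [h.ae_integrable_mul hk f, h.ae_integrable_mul hk g] with x hf hg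
        rw [Pi.add_apply, ← integral_add hf hg]
        refine integral_congr_ae ((Lp.coeFn_add f g).mono fun y hy => ?_)
        simp only [hy, Pi.add_apply, mul_add]
      map_smul' := fun c f => by
        rw [RingHom.id_apply, ← MemLp.toLp_const_smul, MemLp.toLp_eq_toLp_iff]
        filter_upwards with x
        rw [Pi.smul_apply, ← integral_smul]
        refine integral_congr_ae ((Lp.coeFn_smul c f).mono fun y hy => ?_)
        simp only [hy, Pi.smul_apply, mul_smul_comm] }
    C (h.norm_toLp_integral_le hk)

variable (hk : Measurable (uncurry k)) (h : HasL2Bound (fun x y => ‖k x y‖ₑ) C μ ν)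

theorem kernelOperator_ae_eq (f : Lp 𝕜 2 ν) :
    kernelOperator hk h f =ᵐ[μ] fun x => ∫ y, k x y * f y ∂ν :=
  (h.memLp_integral hk f).coeFn_toLp

theorem norm_kernelOperator_le : ‖kernelOperator hk h‖ ≤ C :=
  LinearMap.mkContinuous_norm_le _ C.2 _

theorem inner_kernelOperator_right (f : Lp 𝕜 2 ν) (g : Lp 𝕜 2 μ) :
    inner 𝕜 g (kernelOperator hk h f) = ∫ x, ∫ y, k x y * f y * conj (g x) ∂ν ∂μ := by
  rw [L2.inner_def]
  refine integral_congr_ae ((kernelOperator_ae_eq hk h f).mono fun x hx => ?_)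
  simp only [hx, RCLike.inner_apply, integral_mul_const]

theorem adjoint_kernelOperator [SFinite μ] {j : β → α → 𝕜} {C' : ℝ≥0} (hj : Measurable (uncurry j))
    (h' : HasL2Bound (fun y x => ‖j y x‖ₑ) C' ν μ) (hjk : ∀ x y, j y x = conj (k x y)) :
    adjoint (kernelOperator hk h) = kernelOperator hj h' := by
  refine ((eq_adjoint_iff _ _).2 fun g f => ?_).symm
  rw [inner_kernelOperator_right, integral_integral_swap (h.integrable_prod hk f g),
    ← inner_conj_symm, inner_kernelOperator_right, ← integral_conj]
  refine integral_congr_ae (ae_of_all _ fun y => ?_)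
  simp only [← integral_conj, map_mul, hjk, RCLike.conj_conj]
  congr with x
  ring

theorem kernelOperator_comp_ae_eq [SFinite μ] {j : γ → α → 𝕜} {C' : ℝ≥0}
    (hj : Measurable (uncurry j)) (h' : HasL2Bound (fun z x => ‖j z x‖ₑ) C' ρ μ) (f : Lp 𝕜 2 ν) :
    (kernelOperator hj h' ∘L kernelOperator hk h) f
      =ᵐ[ρ] fun z => ∫ y, (∫ x, j z x * k x y ∂μ) * f y ∂ν := by
  have hf := (Lp.stronglyMeasurable f).measurable
  have hkf : Measurable (uncurry fun x y => ‖k x y‖ₑ * ‖f y‖ₑ) :=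
    hk.enorm.mul (hf.enorm.comp measurable_snd)
  filter_upwards [kernelOperator_ae_eq hj h' (kernelOperator hk h f),
    h'.ae_lintegral_lt_top hj.enorm hkf.lintegral_prod_right
      (h.lintegral_sq_ne_top hf.enorm (lintegral_enorm_sq_coeFn_ne_top f))] with z hz hfin
  have hmeas : Measurable (uncurry fun x y => j z x * k x y * f y) :=
    ((hj.of_uncurry_left.comp measurable_fst).mul hk).mul (hf.comp measurable_snd)
  have hint : Integrable (uncurry fun x y => j z x * k x y * f y) (μ.prod ν) := by
    refine ⟨hmeas.aestronglyMeasurable, ?_⟩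
    rw [HasFiniteIntegral, lintegral_prod _ hmeas.enorm.aemeasurable]
    simpa only [uncurry_apply_pair, enorm_mul, mul_assoc,
      lintegral_const_mul _ hkf.of_uncurry_left] using hfin
  calc (kernelOperator hj h' ∘L kernelOperator hk h) f z
      = ∫ x, j z x * ∫ y, k x y * f y ∂ν ∂μ := by
        rw [ContinuousLinearMap.comp_apply, hz]
        refine integral_congr_ae ((kernelOperator_ae_eq hk h f).mono fun x hx => ?_)
        simp only [hx]
    _ = ∫ x, ∫ y, j z x * k x y * f y ∂ν ∂μ := by simp only [← integral_const_mul, mul_assoc]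
    _ = ∫ y, (∫ x, j z x * k x y ∂μ) * f y ∂ν := by
        rw [integral_integral_swap hint]
        simp only [integral_mul_const]

end KernelOperator

section NonnegKernel

variable {α β : Type*} [MeasurableSpace α] [MeasurableSpace β] {μ : Measure α} {ν : Measure β}

theorem ae_enorm_toReal_of_lintegral_sq_ne_top {f : β → ℝ≥0∞} (hf : Measurable f)
    (hf2 : ∫⁻ y, f y ^ 2 ∂ν ≠ ∞) : ∀ᵐ y ∂ν, ‖(f y).toReal‖ₑ = f y := by
  filter_upwards [ae_lt_top (hf.pow_const 2) hf2] with y hy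
  rw [Real.enorm_of_nonneg ENNReal.toReal_nonneg, ENNReal.ofReal_toReal (by simpa using hy.ne)]

theorem eLpNorm_toReal_two_sq {f : β → ℝ≥0∞} (hf : Measurable f) (hf2 : ∫⁻ y, f y ^ 2 ∂ν ≠ ∞) :
    eLpNorm (fun y => (f y).toReal) 2 ν ^ 2 = ∫⁻ y, f y ^ 2 ∂ν := by
  rw [eLpNorm_two_sq]
  exact lintegral_congr_ae
    ((ae_enorm_toReal_of_lintegral_sq_ne_top hf hf2).mono fun y hy => by simp only [hy])

theorem memLp_toReal_two {f : β → ℝ≥0∞} (hf : Measurable f) (hf2 : ∫⁻ y, f y ^ 2 ∂ν ≠ ∞) :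
    MemLp (fun y => (f y).toReal) 2 ν :=
  ⟨hf.ennreal_toReal.aestronglyMeasurable, (ENNReal.pow_lt_top_iff.1
    ((eLpNorm_toReal_two_sq hf hf2).trans_lt hf2.lt_top)).resolve_right two_ne_zero⟩

variable [SFinite ν] {k : α → β → ℝ} {C : ℝ≥0}

theorem enorm_kernelOperator_of_nonneg (hk : Measurable (uncurry k))
    (h : HasL2Bound (fun x y => ‖k x y‖ₑ) C μ ν) (hk0 : ∀ᵐ x ∂μ, ∀ᵐ y ∂ν, 0 ≤ k x y)
    {φ : Lp ℝ 2 ν} (hφ : ∀ᵐ y ∂ν, 0 ≤ φ y) :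
    ∀ᵐ x ∂μ, ‖kernelOperator hk h φ x‖ₑ = ∫⁻ y, ‖k x y‖ₑ * ‖φ y‖ₑ ∂ν := by
  filter_upwards [kernelOperator_ae_eq hk h φ, h.ae_integrable_mul hk φ, hk0] with x hx hint hk0x
  have nonneg : ∀ᵐ y ∂ν, 0 ≤ k x y * φ y := by
    filter_upwards [hk0x, hφ] with y hy hφy using mul_nonneg hy hφy
  rw [hx, Real.enorm_of_nonneg (integral_nonneg_of_ae nonneg),
    ofReal_integral_eq_lintegral_ofReal hint nonneg]
  exact lintegral_congr_ae (nonneg.mono fun y hy => by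
    simp only [← enorm_mul, Real.enorm_of_nonneg hy])

theorem HasL2Bound.of_kernelOperator (hk : Measurable (uncurry k))
    (h : HasL2Bound (fun x y => ‖k x y‖ₑ) C μ ν) (hk0 : ∀ᵐ x ∂μ, ∀ᵐ y ∂ν, 0 ≤ k x y) :
    HasL2Bound (fun x y => ‖k x y‖ₑ) ‖kernelOperator hk h‖₊ μ ν := by
  intro f hf hf2
  set φ : Lp ℝ 2 ν := (memLp_toReal_two hf hf2).toLp _
  have coeFn_φ : φ =ᵐ[ν] fun y => (f y).toReal := (memLp_toReal_two hf hf2).coeFn_toLp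
  have enorm_φ : ∀ᵐ y ∂ν, ‖φ y‖ₑ = f y := by
    filter_upwards [coeFn_φ, ae_enorm_toReal_of_lintegral_sq_ne_top hf hf2] with y hφ hfy
    rw [hφ, hfy]
  have φ_nonneg : ∀ᵐ y ∂ν, 0 ≤ φ y :=
    coeFn_φ.mono fun y hy => hy.ge.trans' ENNReal.toReal_nonneg
  calc ∫⁻ x, (∫⁻ y, ‖k x y‖ₑ * f y ∂ν) ^ 2 ∂μ
      = ∫⁻ x, ‖kernelOperator hk h φ x‖ₑ ^ 2 ∂μ := by
        refine lintegral_congr_ae ?_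
        filter_upwards [enorm_kernelOperator_of_nonneg hk h hk0 φ_nonneg] with x hx
        simp only [hx, lintegral_congr_ae (enorm_φ.mono fun y hy => congrArg (‖k x y‖ₑ * ·) hy)]
    _ = ‖kernelOperator hk h φ‖ₑ ^ 2 := lintegral_enorm_sq_coeFn _
    _ ≤ (‖kernelOperator hk h‖ₑ * ‖φ‖ₑ) ^ 2 := by gcongr; exact le_opENorm _ _
    _ = ‖kernelOperator hk h‖₊ ^ 2 * ∫⁻ y, f y ^ 2 ∂ν := by
        rw [mul_pow, Lp.enorm_toLp, eLpNorm_toReal_two_sq hf hf2, enorm_eq_nnnorm]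

end NonnegKernel

section HalfLine

/-- Lebesgue measure on the half-line `(0, ∞)`. -/
noncomputable abbrev volumeIoi : Measure ℝ := volume.restrict (Ioi 0)

theorem lintegral_volumeIoi_comp_mul_left {a : ℝ} (ha : 0 < a) (g : ℝ → ℝ≥0∞) :
    ∫⁻ t, g (a * t) ∂volumeIoi = ENNReal.ofReal a⁻¹ * ∫⁻ t, g t ∂volumeIoi := by
  have indicator_comp (t : ℝ) :
      (Ioi 0).indicator (fun t => g (a * t)) t = (Ioi 0).indicator g (a * t) := by
    simp only [indicator_apply, mem_Ioi, mul_pos_iff_of_pos_left ha]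
  calc ∫⁻ t, g (a * t) ∂volumeIoi
      = ∫⁻ t, (Ioi 0).indicator g (MeasurableEquiv.mulLeft₀ a ha.ne' t) := by
        rw [← lintegral_indicator measurableSet_Ioi]
        simp only [indicator_comp, MeasurableEquiv.coe_mulLeft₀]
    _ = ∫⁻ t, (Ioi 0).indicator g t ∂Measure.map (a * ·) volume := by
        rw [← lintegral_map_equiv, MeasurableEquiv.coe_mulLeft₀]
    _ = ENNReal.ofReal a⁻¹ * ∫⁻ t, g t ∂volumeIoi := by
        rw [Real.map_volume_mul_left ha.ne', lintegral_smul_measure,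
          lintegral_indicator measurableSet_Ioi, abs_of_pos (inv_pos.2 ha), smul_eq_mul]

theorem HasL2Bound.dilate {k : ℝ → ℝ → ℝ≥0∞} {C : ℝ≥0} (h : HasL2Bound k C volumeIoi volumeIoi)
    {a : ℝ} (ha : 0 < a) :
    HasL2Bound (fun s t => k (a⁻¹ * s) (a * t)) C volumeIoi volumeIoi := by
  intro f hf hf2
  set b : ℝ≥0∞ := ENNReal.ofReal a
  set b' : ℝ≥0∞ := ENNReal.ofReal a⁻¹
  have b'_mul_b : b' * b = 1 := by
    rw [← ENNReal.ofReal_mul (inv_pos.2 ha).le, inv_mul_cancel₀ ha.ne', ENNReal.ofReal_one]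
  set g : ℝ → ℝ≥0∞ := fun t => f (a⁻¹ * t)
  have lintegral_g_sq : ∫⁻ t, g t ^ 2 ∂volumeIoi = b * ∫⁻ t, f t ^ 2 ∂volumeIoi := by
    simpa only [inv_inv] using
      lintegral_volumeIoi_comp_mul_left (inv_pos.2 ha) fun t => f t ^ 2
  have inner_eq (s : ℝ) : ∫⁻ t, k (a⁻¹ * s) (a * t) * f t ∂volumeIoi
      = b' * ∫⁻ t, k (a⁻¹ * s) t * g t ∂volumeIoi := by
    rw [← lintegral_volumeIoi_comp_mul_left ha]
    simp only [g, inv_mul_cancel_left₀ ha.ne']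
  calc ∫⁻ s, (∫⁻ t, k (a⁻¹ * s) (a * t) * f t ∂volumeIoi) ^ 2 ∂volumeIoi
      = b' ^ 2 * ∫⁻ s, (∫⁻ t, k (a⁻¹ * s) t * g t ∂volumeIoi) ^ 2 ∂volumeIoi := by
        simp only [inner_eq, mul_pow]
        exact lintegral_const_mul' _ _ (by finiteness)
    _ = b' ^ 2 * (b * ∫⁻ s, (∫⁻ t, k s t * g t ∂volumeIoi) ^ 2 ∂volumeIoi) := by
        rw [lintegral_volumeIoi_comp_mul_left (inv_pos.2 ha)
          fun s => (∫⁻ t, k s t * g t ∂volumeIoi) ^ 2, inv_inv]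
    _ ≤ b' ^ 2 * (b * (C ^ 2 * (b * ∫⁻ t, f t ^ 2 ∂volumeIoi))) := by
        rw [← lintegral_g_sq]
        gcongr
        exact h (hf.comp (measurable_const_mul _)) (by rw [lintegral_g_sq]; finiteness)
    _ = (b' * b) ^ 2 * (C ^ 2 * ∫⁻ t, f t ^ 2 ∂volumeIoi) := by ring
    _ = C ^ 2 * ∫⁻ t, f t ^ 2 ∂volumeIoi := by rw [b'_mul_b, one_pow, one_mul]

end HalfLine

section LaplaceBound

theorem lintegral_exp_neg_mul_mul_rpow {a r : ℝ} (ha : 0 < a) (hr : 0 < r) :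
    ∫⁻ t, ‖exp (-(r * t))‖ₑ * ‖t ^ (a - 1)‖ₑ ∂volumeIoi
      = ENNReal.ofReal (Gamma a * r ^ (-a)) := by
  have integral_eq : ∫ t, exp (-(r * t)) * t ^ (a - 1) ∂volumeIoi = Gamma a * r ^ (-a) := by
    simp only [mul_comm (exp _), integral_rpow_mul_exp_neg_mul_Ioi ha hr, one_div,
      inv_rpow hr.le, rpow_neg hr.le, mul_comm (Gamma a)]
  have integrable : Integrable (fun t => exp (-(r * t)) * t ^ (a - 1)) volumeIoi :=
    .of_integral_ne_zero <| by rw [integral_eq]; positivity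
  have nonneg : ∀ᵐ t ∂volumeIoi, 0 ≤ exp (-(r * t)) * t ^ (a - 1) :=
    ae_restrict_of_forall_mem measurableSet_Ioi fun t (ht : 0 < t) => by positivity
  rw [← integral_eq, ofReal_integral_eq_lintegral_ofReal integrable nonneg]
  exact lintegral_congr_ae (nonneg.mono fun t ht => by
    simp only [← enorm_mul, Real.enorm_of_nonneg ht])

theorem hasL2Bound_laplace :
    HasL2Bound (fun s t : ℝ => ‖exp (-(s * t))‖ₑ) (NNReal.sqrt NNReal.pi) volumeIoi volumeIoi := by
  set w : ℝ → ℝ≥0∞ := fun t => ‖t ^ (1 / 2 - 1 : ℝ)‖ₑ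
  have w_meas : Measurable w := by fun_prop
  have lintegral_eq {s : ℝ} (hs : 0 < s) :
      ∫⁻ t, ‖exp (-(s * t))‖ₑ * w t ∂volumeIoi = NNReal.sqrt NNReal.pi * w s := by
    have enorm_rpow : w s = ENNReal.ofReal (s ^ (-(1 / 2) : ℝ)) := by
      rw [← Real.enorm_of_nonneg (rpow_nonneg hs.le _)]
      norm_num [w]
    rw [lintegral_exp_neg_mul_mul_rpow one_half_pos hs, Gamma_one_half_eq, ← NNReal.coe_real_pi,
      ← Real.coe_sqrt, ENNReal.ofReal_mul NNReal.zero_le_coe, ENNReal.ofReal_coe_nnreal, enorm_rpow]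
  refine .of_schur (by fun_prop) w_meas w_meas ?_ (by simp [w])
    (ae_restrict_of_forall_mem measurableSet_Ioi fun s hs => (lintegral_eq hs).le)
    (ae_restrict_of_forall_mem measurableSet_Ioi fun t ht => ?_)
  · exact ae_restrict_of_forall_mem measurableSet_Ioi fun t ht =>
      enorm_ne_zero.2 (rpow_pos_of_pos ht _).ne'
  · simpa only [mul_comm] using (lintegral_eq ht).le

/-- The eigenfunction `t ^ (-1/2)` of the Laplace transform, damped by the factor
`min(t, 1/t) ^ ε` so as to be square-integrable on `(0, ∞)` for `ε > 0`. -/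
noncomputable def dampedInvSqrt (ε t : ℝ) : ℝ := exp (-(log t / 2) - ε * |log t|)

@[fun_prop]
theorem measurable_dampedInvSqrt (ε : ℝ) : Measurable (dampedInvSqrt ε) := by
  unfold dampedInvSqrt
  fun_prop

theorem dampedInvSqrt_pos (ε t : ℝ) : 0 < dampedInvSqrt ε t := exp_pos _

theorem dampedInvSqrt_mul_le {ε s v : ℝ} (hε : 0 ≤ ε) (hs : 0 < s) (hv : 0 < v) :
    s * dampedInvSqrt ε s * dampedInvSqrt ε v ≤ dampedInvSqrt ε (s⁻¹ * v) := by
  have log_eq : log (s⁻¹ * v) = log v - log s := by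
    rw [log_mul (inv_pos.2 hs).ne' hv.ne', log_inv]
    ring
  have damping := mul_le_mul_of_nonneg_left (abs_sub (log v) (log s)) hε
  calc s * dampedInvSqrt ε s * dampedInvSqrt ε v
      = exp (log s + (-(log s / 2) - ε * |log s|) + (-(log v / 2) - ε * |log v|)) := by
        rw [exp_add, exp_add, exp_log hs, dampedInvSqrt, dampedInvSqrt]
    _ ≤ dampedInvSqrt ε (s⁻¹ * v) := by
        rw [dampedInvSqrt, log_eq]
        gcongr
        linarith

theorem lintegral_dampedInvSqrt_mul_le {ε s : ℝ} (hε : 0 ≤ ε) (hs : 0 < s) :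
    (∫⁻ v, ‖exp (-v)‖ₑ * ‖dampedInvSqrt ε v‖ₑ ∂volumeIoi) * ‖dampedInvSqrt ε s‖ₑ
      ≤ ∫⁻ t, ‖exp (-(s * t))‖ₑ * ‖dampedInvSqrt ε t‖ₑ ∂volumeIoi := calc
  _ = ENNReal.ofReal s⁻¹ *
        ∫⁻ v, ‖exp (-v)‖ₑ * ‖s * dampedInvSqrt ε s * dampedInvSqrt ε v‖ₑ ∂volumeIoi := by
    have inv_mul_enorm : ENNReal.ofReal s⁻¹ * ‖s‖ₑ = 1 := by
      rw [← Real.enorm_of_nonneg (inv_pos.2 hs).le, ← enorm_mul, inv_mul_cancel₀ hs.ne', enorm_one]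
    simp only [enorm_mul, mul_left_comm _ (‖s‖ₑ * _)]
    rw [lintegral_const_mul _ (by fun_prop), mul_assoc, ← mul_assoc, inv_mul_enorm, one_mul,
      mul_comm]
  _ ≤ ENNReal.ofReal s⁻¹ * ∫⁻ v, ‖exp (-v)‖ₑ * ‖dampedInvSqrt ε (s⁻¹ * v)‖ₑ ∂volumeIoi := by
    refine mul_le_mul_right (setLIntegral_mono' measurableSet_Ioi fun v hv => ?_) _
    refine mul_le_mul_right ?_ _
    rw [Real.enorm_of_nonneg (dampedInvSqrt_pos _ _).le, Real.enorm_of_nonneg]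
    · exact ENNReal.ofReal_le_ofReal (dampedInvSqrt_mul_le hε hs hv)
    · exact (mul_pos (mul_pos hs (dampedInvSqrt_pos _ _)) (dampedInvSqrt_pos _ _)).le
  _ = ∫⁻ t, ‖exp (-(s * t))‖ₑ * ‖dampedInvSqrt ε t‖ₑ ∂volumeIoi := by
    rw [← lintegral_volumeIoi_comp_mul_left hs]
    simp only [inv_mul_cancel_left₀ hs.ne']

theorem dampedInvSqrt_eq_rpow_of_le_one {ε t : ℝ} (ht : 0 < t) (ht1 : t ≤ 1) :
    dampedInvSqrt ε t = t ^ (ε - 1 / 2) := by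
  rw [dampedInvSqrt, abs_of_nonpos (log_nonpos ht.le ht1), rpow_def_of_pos ht]
  ring_nf

theorem dampedInvSqrt_eq_rpow_of_one_le {ε t : ℝ} (ht1 : 1 ≤ t) :
    dampedInvSqrt ε t = t ^ (-ε - 1 / 2) := by
  rw [dampedInvSqrt, abs_of_nonneg (log_nonneg ht1), rpow_def_of_pos (one_pos.trans_le ht1)]
  ring_nf

theorem integrable_dampedInvSqrt_sq {ε : ℝ} (hε : 0 < ε) :
    Integrable (fun t => dampedInvSqrt ε t ^ 2) volumeIoi := by
  have near_zero : IntegrableOn (fun t => dampedInvSqrt ε t ^ 2) (Ioc 0 1) := by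
    refine ((intervalIntegral.intervalIntegrable_rpow' (a := 0) (b := 1)
      (r := 2 * ε - 1) (by linarith)).1).congr_fun (fun t ht => ?_) measurableSet_Ioc
    rw [dampedInvSqrt_eq_rpow_of_le_one ht.1 ht.2, ← rpow_mul_natCast ht.1.le]
    ring_nf
  have near_top : IntegrableOn (fun t => dampedInvSqrt ε t ^ 2) (Ioi 1) := by
    refine (integrableOn_Ioi_rpow_of_lt (a := -2 * ε - 1) (by linarith) one_pos).congr_fun
      (fun t (ht : 1 < t) => ?_) measurableSet_Ioi
    rw [dampedInvSqrt_eq_rpow_of_one_le ht.le, ← rpow_mul_natCast (one_pos.trans ht).le]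
    ring_nf
  rw [← IntegrableOn, ← Ioc_union_Ioi_eq_Ioi zero_le_one]
  exact near_zero.union near_top

theorem lintegral_exp_neg_mul_dampedInvSqrt_le {C : ℝ≥0} {ε : ℝ} (hε : 0 < ε)
    (h : HasL2Bound (fun s t : ℝ => ‖exp (-(s * t))‖ₑ) C volumeIoi volumeIoi) :
    ∫⁻ v, ‖exp (-v)‖ₑ * ‖dampedInvSqrt ε v‖ₑ ∂volumeIoi ≤ C := by
  refine h.le_of_subeigenfunction (measurable_dampedInvSqrt ε).enorm ?_ ?_
    (ae_restrict_of_forall_mem measurableSet_Ioi fun s hs =>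
      lintegral_dampedInvSqrt_mul_le hε.le hs)
  · have support_eq : support (fun t => ‖dampedInvSqrt ε t‖ₑ ^ 2) = univ :=
      eq_univ_of_forall fun t => pow_ne_zero 2 (enorm_ne_zero.2 (dampedInvSqrt_pos ε t).ne')
    refine ((lintegral_pos_iff_support (by fun_prop)).2 ?_).ne'
    simp [support_eq]
  · simpa only [enorm_pow] using (integrable_dampedInvSqrt_sq hε).2.ne

theorem sqrt_pi_le_of_hasL2Bound_laplace {C : ℝ≥0}
    (h : HasL2Bound (fun s t : ℝ => ‖exp (-(s * t))‖ₑ) C volumeIoi volumeIoi) :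
    NNReal.sqrt NNReal.pi ≤ C := by
  have tendsto_dampedInvSqrt (v : ℝ) (hv : 0 < v) :
      Tendsto (fun ε => dampedInvSqrt ε v) (𝓝[>] (0 : ℝ)) (𝓝 (v ^ (1 / 2 - 1 : ℝ))) := by
    have : Continuous fun ε => dampedInvSqrt ε v := by
      unfold dampedInvSqrt
      fun_prop
    refine (this.tendsto' 0 _ ?_).mono_left nhdsWithin_le_nhds
    rw [dampedInvSqrt, rpow_def_of_pos hv]
    ring_nf
  rw [← ENNReal.coe_le_coe]
  calc (NNReal.sqrt NNReal.pi : ℝ≥0∞)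
      = ∫⁻ v, ‖exp (-v)‖ₑ * ‖v ^ (1 / 2 - 1 : ℝ)‖ₑ ∂volumeIoi := by
        have := lintegral_exp_neg_mul_mul_rpow one_half_pos one_pos
        simp only [one_mul, one_rpow, mul_one, Gamma_one_half_eq] at this
        rw [this, ← NNReal.coe_real_pi, ← Real.coe_sqrt, ENNReal.ofReal_coe_nnreal]
    _ ≤ ∫⁻ v, liminf (fun ε => ‖exp (-v)‖ₑ * ‖dampedInvSqrt ε v‖ₑ) (𝓝[>] (0 : ℝ)) ∂volumeIoi := by
        refine setLIntegral_mono' measurableSet_Ioi fun v hv => ?_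
        rw [(ENNReal.Tendsto.const_mul (tendsto_dampedInvSqrt v hv).enorm
          (.inr enorm_ne_top)).liminf_eq]
    _ ≤ liminf (fun ε => ∫⁻ v, ‖exp (-v)‖ₑ * ‖dampedInvSqrt ε v‖ₑ ∂volumeIoi) (𝓝[>] (0 : ℝ)) :=
        lintegral_liminf_le fun ε => by fun_prop
    _ ≤ C := by
        refine liminf_le_of_frequently_le' (Eventually.frequently ?_)
        filter_upwards [self_mem_nhdsWithin] with ε hε
        exact lintegral_exp_neg_mul_dampedInvSqrt_le hε h

end LaplaceBound

section MassiveLaplace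

/-- The kernel `e^{-s(t + m/2)} t / (t + m)` of the operator `L` with `L† L = A`, where `m = μ²`
is the squared mass. For `m = 0` and `t > 0` it is the Laplace kernel `e^{-st}`. -/
noncomputable def massiveLaplaceKernel (m s t : ℝ) : ℝ := exp (-(s * (t + m / 2))) * (t / (t + m))

variable {m : ℝ}

theorem measurable_massiveLaplaceKernel (m : ℝ) :
    Measurable (uncurry (massiveLaplaceKernel m)) := by
  unfold massiveLaplaceKernel
  fun_prop

theorem measurable_massiveLaplaceKernel_swap (m : ℝ) :
    Measurable (uncurry fun t s => massiveLaplaceKernel m s t) :=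
  (measurable_massiveLaplaceKernel m).comp measurable_swap

theorem massiveLaplaceKernel_nonneg (hm : 0 ≤ m) (s : ℝ) {t : ℝ} (ht : 0 < t) :
    0 ≤ massiveLaplaceKernel m s t := by
  unfold massiveLaplaceKernel
  positivity

theorem massiveLaplaceKernel_le (hm : 0 ≤ m) {s t : ℝ} (hs : 0 < s) (ht : 0 < t) :
    massiveLaplaceKernel m s t ≤ exp (-(s * t)) := by
  calc massiveLaplaceKernel m s t ≤ exp (-(s * (t + m / 2))) * 1 := by
        refine mul_le_mul_of_nonneg_left ?_ (exp_pos _).le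
        rw [div_le_one (by positivity)]
        linarith
    _ ≤ exp (-(s * t)) := by
        rw [mul_one]
        gcongr
        linarith

theorem enorm_massiveLaplaceKernel_le (hm : 0 ≤ m) {s t : ℝ} (hs : 0 < s) (ht : 0 < t) :
    ‖massiveLaplaceKernel m s t‖ₑ ≤ ‖exp (-(s * t))‖ₑ := by
  rw [Real.enorm_of_nonneg (massiveLaplaceKernel_nonneg hm s ht),
    Real.enorm_of_nonneg (exp_pos _).le]
  exact ENNReal.ofReal_le_ofReal (massiveLaplaceKernel_le hm hs ht)

theorem hasL2Bound_massiveLaplaceKernel (hm : 0 ≤ m) :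
    HasL2Bound (fun s t => ‖massiveLaplaceKernel m s t‖ₑ) (NNReal.sqrt NNReal.pi)
      volumeIoi volumeIoi :=
  hasL2Bound_laplace.mono <| ae_restrict_of_forall_mem measurableSet_Ioi fun _ hs =>
    ae_restrict_of_forall_mem measurableSet_Ioi fun _ ht => enorm_massiveLaplaceKernel_le hm hs ht

theorem hasL2Bound_massiveLaplaceKernel_swap (hm : 0 ≤ m) :
    HasL2Bound (fun t s => ‖massiveLaplaceKernel m s t‖ₑ) (NNReal.sqrt NNReal.pi)
      volumeIoi volumeIoi :=
  hasL2Bound_laplace.mono <| ae_restrict_of_forall_mem measurableSet_Ioi fun t ht =>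
    ae_restrict_of_forall_mem measurableSet_Ioi fun s hs => by
      simpa only [mul_comm] using enorm_massiveLaplaceKernel_le hm hs ht

theorem massiveLaplaceKernel_dilate {a : ℝ} (ha : 0 < a) (s t : ℝ) :
    massiveLaplaceKernel m (a⁻¹ * s) (a * t) = massiveLaplaceKernel (a⁻¹ * m) s t := by
  have exponent_eq : a⁻¹ * s * (a * t + m / 2) = s * (t + a⁻¹ * m / 2) := by field_simp
  have factor_eq : a * t / (a * t + m) = t / (t + a⁻¹ * m) := by
    rw [← mul_div_mul_left t _ ha.ne', mul_add, mul_inv_cancel_left₀ ha.ne']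
  rw [massiveLaplaceKernel, massiveLaplaceKernel, exponent_eq, factor_eq]

theorem tendsto_massiveLaplaceKernel_zero (s : ℝ) {t : ℝ} (ht : 0 < t) :
    Tendsto (fun m => massiveLaplaceKernel m s t) (𝓝 0) (𝓝 (exp (-(s * t)))) := by
  have : ContinuousAt (fun m => massiveLaplaceKernel m s t) 0 := by
    unfold massiveLaplaceKernel
    fun_prop (disch := simp [ht.ne'])
  simpa [ContinuousAt, massiveLaplaceKernel, ht.ne'] using this

theorem integral_massiveLaplaceKernel_mul (hm : 0 ≤ m) {t u : ℝ} (ht : 0 < t) (hu : 0 < u) :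
    ∫ s, massiveLaplaceKernel m s t * massiveLaplaceKernel m s u ∂volumeIoi
      = t * u / ((t + m) * (t + u + m) * (u + m)) := by
  have kernel_mul (s : ℝ) : massiveLaplaceKernel m s t * massiveLaplaceKernel m s u
      = t / (t + m) * (u / (u + m)) * exp (-(t + u + m) * s) := by
    rw [massiveLaplaceKernel, massiveLaplaceKernel, mul_mul_mul_comm, ← exp_add]
    ring_nf
  simp only [kernel_mul]
  rw [integral_const_mul, integral_exp_mul_Ioi (by linarith), mul_zero, exp_zero]
  field_simp

/-- The operator `L` with kernel `massiveLaplaceKernel m`. -/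
noncomputable def massiveLaplace (m : ℝ) (hm : 0 ≤ m) : Lp ℝ 2 volumeIoi →L[ℝ] Lp ℝ 2 volumeIoi :=
  kernelOperator (measurable_massiveLaplaceKernel m) (hasL2Bound_massiveLaplaceKernel hm)

theorem sqrt_pi_le_of_hasL2Bound_massiveLaplaceKernel {C : ℝ≥0}
    (h : HasL2Bound (fun s t => ‖massiveLaplaceKernel m s t‖ₑ) C volumeIoi volumeIoi) :
    NNReal.sqrt NNReal.pi ≤ C := by
  have rescaled {a : ℝ} (ha : 0 < a) :
      HasL2Bound (fun s t => ‖massiveLaplaceKernel (a⁻¹ * m) s t‖ₑ) C volumeIoi volumeIoi := by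
    simpa only [massiveLaplaceKernel_dilate ha] using h.dilate ha
  have mass_tendsto_zero : Tendsto (fun a : ℝ => a⁻¹ * m) atTop (𝓝 0) := by
    simpa using tendsto_inv_atTop_zero.mul_const m
  refine sqrt_pi_le_of_hasL2Bound_laplace <|
    .of_tendsto (K := fun a s t => ‖massiveLaplaceKernel (a⁻¹ * m) s t‖ₑ) (l := atTop)
    (fun a => (measurable_massiveLaplaceKernel (a⁻¹ * m)).enorm)
    ((eventually_gt_atTop 0).mono fun a => rescaled) (ae_of_all _ fun s =>
      ae_restrict_of_forall_mem measurableSet_Ioi fun t ht => ?_)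
  exact ((tendsto_massiveLaplaceKernel_zero s ht).comp mass_tendsto_zero).enorm

theorem norm_massiveLaplace (hm : 0 ≤ m) : ‖massiveLaplace m hm‖ = √π := by
  rw [← NNReal.coe_real_pi, ← Real.coe_sqrt]
  have lower_bound : NNReal.sqrt NNReal.pi ≤ ‖massiveLaplace m hm‖₊ := by
    refine sqrt_pi_le_of_hasL2Bound_massiveLaplaceKernel (m := m) ?_
    exact .of_kernelOperator _ (hasL2Bound_massiveLaplaceKernel hm) <| ae_of_all _ fun s =>
      ae_restrict_of_forall_mem measurableSet_Ioi fun _ ht => massiveLaplaceKernel_nonneg hm s ht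
  exact le_antisymm (norm_kernelOperator_le _ _) lower_bound

theorem adjoint_massiveLaplace_comp_self_ae_eq (hm : 0 ≤ m) (φ : Lp ℝ 2 volumeIoi) :
    (adjoint (massiveLaplace m hm) ∘L massiveLaplace m hm) φ =ᵐ[volumeIoi] fun t =>
      ∫ u, t * u / ((t + m) * (t + u + m) * (u + m)) * φ u ∂volumeIoi := by
  have adjoint_eq : adjoint (massiveLaplace m hm) = kernelOperator
      (measurable_massiveLaplaceKernel_swap m) (hasL2Bound_massiveLaplaceKernel_swap hm) :=
    adjoint_kernelOperator _ _ _ _ fun _ _ => rfl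
  rw [adjoint_eq]
  filter_upwards [kernelOperator_comp_ae_eq (measurable_massiveLaplaceKernel m)
    (hasL2Bound_massiveLaplaceKernel hm) (measurable_massiveLaplaceKernel_swap m)
    (hasL2Bound_massiveLaplaceKernel_swap hm) φ, ae_restrict_mem measurableSet_Ioi] with t h ht
  rw [massiveLaplace, h]
  exact setIntegral_congr_fun measurableSet_Ioi fun u hu => by
    simp only [integral_massiveLaplaceKernel_mul hm ht hu]

end MassiveLaplace

/-- The massless case `m = 0` is Carleman's operator, with kernel `1 / (t + u)`. -/
theorem symmetrised_operator_norm_general (m : ℝ) (hm : 0 ≤ m) :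
    ∃ A : Lp ℝ 2 (volume.restrict (Ioi (0 : ℝ))) →L[ℝ] Lp ℝ 2 (volume.restrict (Ioi (0 : ℝ))),
      (∀ φ : Lp ℝ 2 (volume.restrict (Ioi (0 : ℝ))),
        A φ =ᵐ[volume.restrict (Ioi (0 : ℝ))] fun t =>
          ∫ u in Ioi (0 : ℝ), t * u / ((t + m) * (t + u + m) * (u + m)) * φ u) ∧
      (∀ φ ψ : Lp ℝ 2 (volume.restrict (Ioi (0 : ℝ))), ⟪A φ, ψ⟫ = ⟪φ, A ψ⟫) ∧
      (∀ φ : Lp ℝ 2 (volume.restrict (Ioi (0 : ℝ))), 0 ≤ ⟪A φ, φ⟫) ∧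
      ‖A‖ = π := by
  have positive := isPositive_adjoint_comp_self (massiveLaplace m hm)
  refine ⟨adjoint (massiveLaplace m hm) ∘L massiveLaplace m hm,
    adjoint_massiveLaplace_comp_self_ae_eq hm, positive.isSymmetric, positive.inner_nonneg_left, ?_⟩
  rw [norm_adjoint_comp_self, norm_massiveLaplace, mul_self_sqrt pi_nonneg]

theorem symmetrised_operator_norm (μ : ℝ) (hμ : 0 < μ) :
    ∃ A : Lp ℝ 2 (volume.restrict (Set.Ioi (0:ℝ))) →L[ℝ]
          Lp ℝ 2 (volume.restrict (Set.Ioi (0:ℝ))),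
      (∀ φ : Lp ℝ 2 (volume.restrict (Set.Ioi (0:ℝ))),
        (A φ : ℝ → ℝ) =ᵐ[volume.restrict (Set.Ioi (0:ℝ))]
          fun t => ∫ u in Set.Ioi (0:ℝ),
            (t * u / ((t + μ^2) * (t + u + μ^2) * (u + μ^2))) * φ u) ∧
      (∀ φ ψ : Lp ℝ 2 (volume.restrict (Set.Ioi (0:ℝ))), ⟪A φ, ψ⟫ = ⟪φ, A ψ⟫) ∧
      (∀ φ : Lp ℝ 2 (volume.restrict (Set.Ioi (0:ℝ))), 0 ≤ ⟪A φ, φ⟫) ∧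
      ‖A‖ = π :=
  symmetrised_operator_norm_general (μ ^ 2) (sq_nonneg μ)
end

section
/- Let α ∈ (0,1). For every x ≥ 0 the series Σ_{n=0}^∞ α^{2n} B_n(x) converges absolutely and equals x·H_α(x), where H_α(x) := ₂F₁(1+α, 1−α; 2; −x) is given by H_α(x) = (1/(Γ(1−α)Γ(1+α))) ∫₀¹ u^{−α}(1−u)^{α}(1+xu)^{−1−α} du. -/
open MeasureTheory Real Set

/-- The hyperlogarithm `Hlog(x,[0,-1,…,0,-1])` with `n` alternating letter pairs `(0,-1)`,
defined recursively together with `Bfun`. -/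
noncomputable def Afun : ℕ → ℝ → ℝ
  | 0 => fun _ => 1
  | n+1 => fun x => ∫ t in (0:ℝ)..x, (∫ s in (0:ℝ)..t, Afun n s / (1 + s)) / t

/-- The hyperlogarithm `Hlog(x,[-1,0,-1,…,0,-1])`: the letter `-1` followed by `n`
alternating pairs `(0,-1)`. -/
noncomputable def Bfun (n : ℕ) (x : ℝ) : ℝ := ∫ t in (0:ℝ)..x, Afun n t / (1 + t)

/-- The Gauss hypergeometric function `₂F₁(1+α, 1-α; 2; -x)` via its Euler integral. -/
noncomputable def Hhyp (α x : ℝ) : ℝ :=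
  (1 / (Real.Gamma (1 - α) * Real.Gamma (1 + α))) *
    ∫ u in (0:ℝ)..1, u ^ (-α) * (1 - u) ^ α * (1 + x * u) ^ (-1 - α)

/-!
Euler's integral for `₂F₁(a, b; c; -x)` satisfies the hypergeometric equation because the
corresponding combination of integrands is the `u`-derivative of a multiple of
`u ^ b * (1 - u) ^ (c - b) * (1 + x * u) ^ (-a - 1)`, which vanishes at both endpoints.

For `H = Hhyp α` and `F(x) = (1 + x) (x H(x))'` the equation says that `F' = α² H`. As `F(0) = 1`,
this integrates to `F = 1 + α² L F`, where `L f(x) = ∫₀ˣ (∫₀ᵗ f(s) / (1 + s) ds) / t dt`. Since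
`Aₙ = Lⁿ 1`, iterating gives `F = ∑_{i < n} α²ⁱ Aᵢ + α²ⁿ Lⁿ F` with `Lⁿ F(x) = O(xⁿ / n!)`.
Dividing by `1 + x` and integrating turns `Aᵢ` into `Bᵢ` and `F` into `x H(x)`.
-/

open Filter Topology

theorem hasDerivAt_intervalIntegral_mul {w : ℝ → ℝ} {φ φ' : ℝ → ℝ → ℝ} {a b x : ℝ} {s : Set ℝ}
    (hs : s ∈ 𝓝 x) (hw : IntervalIntegrable w volume a b)
    (hφ : ∀ y ∈ s, ContinuousOn (φ y) (uIcc a b))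
    (hφ' : ContinuousOn (Function.uncurry φ') (s ×ˢ uIcc a b))
    (hderiv : ∀ y ∈ s, ∀ u ∈ uIcc a b, HasDerivAt (φ · u) (φ' y u) y) :
    HasDerivAt (fun y ↦ ∫ u in a..b, w u * φ y u) (∫ u in a..b, w u * φ' x u) x := by
  obtain ⟨K, hK, hKs, hKc⟩ := local_compact_nhds hs
  obtain ⟨C, hC⟩ := (hKc.prod isCompact_uIcc).exists_bound_of_continuousOn
    (hφ'.mono (prod_mono_left hKs))
  have hx : x ∈ s := mem_of_mem_nhds hs
  have hφ_x : ContinuousOn (φ' x) (uIcc a b) :=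
    hφ'.comp (f := fun u ↦ (x, u)) (by fun_prop) fun u hu ↦ ⟨hx, hu⟩
  have hint (y : ℝ) (hy : y ∈ s) : IntervalIntegrable (fun u ↦ w u * φ y u) volume a b :=
    hw.mul_continuousOn (hφ y hy)
  refine (intervalIntegral.hasDerivAt_integral_of_dominated_loc_of_deriv_le
    (F := fun y u ↦ w u * φ y u) (F' := fun y u ↦ w u * φ' y u)
    (bound := fun u ↦ ‖w u‖ * C) hK ?_ (hint x hx)
    (hw.mul_continuousOn hφ_x).def'.aestronglyMeasurable ?_ (hw.norm.mul_const C) ?_).2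
  · filter_upwards [hs] with y hy using (hint y hy).def'.aestronglyMeasurable
  · refine Eventually.of_forall fun u hu y hy ↦ ?_
    rw [norm_mul]
    gcongr
    exact hC (y, u) ⟨hy, uIoc_subset_uIcc hu⟩
  · exact Eventually.of_forall fun u hu y hy ↦
      (hderiv y (hKs hy) u (uIoc_subset_uIcc hu)).const_mul (w u)

section Beta

variable {p q : ℝ}

theorem ofReal_rpow_mul_one_sub_rpow {u : ℝ} (hu : u ∈ Icc (0 : ℝ) 1) :
    ((u ^ (p - 1) * (1 - u) ^ (q - 1) : ℝ) : ℂ) =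
      (u : ℂ) ^ ((p : ℂ) - 1) * (1 - (u : ℂ)) ^ ((q : ℂ) - 1) := by
  rw [Complex.ofReal_mul, Complex.ofReal_cpow hu.1, Complex.ofReal_cpow (sub_nonneg.2 hu.2)]
  push_cast
  rfl

theorem intervalIntegrable_rpow_mul_one_sub_rpow (hp : 0 < p) (hq : 0 < q) :
    IntervalIntegrable (fun u : ℝ ↦ u ^ (p - 1) * (1 - u) ^ (q - 1)) volume 0 1 := by
  have hconv := Complex.betaIntegral_convergent (u := p) (v := q) (by simpa) (by simpa)
  rw [intervalIntegrable_iff_integrableOn_Ioc_of_le zero_le_one] at hconv ⊢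
  refine hconv.re.congr ?_
  filter_upwards [ae_restrict_mem measurableSet_Ioc] with u hu
  rw [← ofReal_rpow_mul_one_sub_rpow (Ioc_subset_Icc_self hu)]
  exact Complex.ofReal_re _

theorem integral_rpow_mul_one_sub_rpow (hp : 0 < p) (hq : 0 < q) :
    ∫ u in (0 : ℝ)..1, u ^ (p - 1) * (1 - u) ^ (q - 1) = ProbabilityTheory.beta p q := by
  rw [ProbabilityTheory.beta_eq_betaIntegralReal p q hp hq, Complex.betaIntegral,
    ← Complex.ofReal_re (∫ _ in _.._, _), ← intervalIntegral.integral_ofReal]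
  congr 1
  refine intervalIntegral.integral_congr fun u hu ↦ ?_
  rw [uIcc_of_le zero_le_one] at hu
  exact ofReal_rpow_mul_one_sub_rpow hu

end Beta

/-- The integrand of Euler's integral for `₂F₁(a, b; c; -x)`. -/
noncomputable def eulerIntegrand (a b c x u : ℝ) : ℝ :=
  u ^ (b - 1) * (1 - u) ^ (c - b - 1) * (1 + x * u) ^ (-a)

/-- Euler's integral `Β(b, c - b) · ₂F₁(a, b; c; -x)`, without the normalizing Beta factor. -/
noncomputable def eulerIntegral (a b c x : ℝ) : ℝ :=
  ∫ u in (0 : ℝ)..1, eulerIntegrand a b c x u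

section Euler

theorem one_add_mul_pos {x u : ℝ} (hx : -1 < x) (hu : u ∈ Icc (0 : ℝ) 1) : 0 < 1 + x * u := by
  rcases hu.1.eq_or_lt with rfl | hu0
  · simp
  · nlinarith [hu.2]

variable {a b c x : ℝ}

theorem continuousOn_one_add_mul_rpow (p : ℝ) :
    ContinuousOn (fun z : ℝ × ℝ ↦ (1 + z.1 * z.2) ^ p) (Ioi (-1) ×ˢ Icc 0 1) :=
  ContinuousOn.rpow_const (by fun_prop) fun _ hz ↦ .inl (one_add_mul_pos hz.1 hz.2).ne'

theorem intervalIntegrable_eulerIntegrand (hb : 0 < b) (hbc : b < c) (hx : -1 < x) :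
    IntervalIntegrable (eulerIntegrand a b c x) volume 0 1 := by
  refine (intervalIntegrable_rpow_mul_one_sub_rpow hb (sub_pos.2 hbc)).mul_continuousOn ?_
  rw [uIcc_of_le zero_le_one]
  exact (continuousOn_one_add_mul_rpow (-a)).comp (f := fun u ↦ (x, u)) (by fun_prop)
    fun u hu ↦ ⟨hx, hu⟩

theorem eulerIntegral_zero (hb : 0 < b) (hbc : b < c) :
    eulerIntegral a b c 0 = ProbabilityTheory.beta b (c - b) := by
  simp [eulerIntegral, eulerIntegrand, integral_rpow_mul_one_sub_rpow hb (sub_pos.2 hbc)]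

theorem hasDerivAt_one_add_mul_rpow {u : ℝ} (p : ℝ) (h : 0 < 1 + x * u) :
    HasDerivAt (fun y ↦ (1 + y * u) ^ p) (u * p * (1 + x * u) ^ (p - 1)) x :=
  ((hasDerivAt_mul_const u).const_add 1).rpow_const (.inl h.ne')

theorem hasDerivAt_eulerIntegral (hb : 0 < b) (hbc : b < c) (hx : -1 < x) :
    HasDerivAt (eulerIntegral a b c) (-a * eulerIntegral (a + 1) (b + 1) (c + 1) x) x := by
  have h := hasDerivAt_intervalIntegral_mul (φ := fun y u ↦ (1 + y * u) ^ (-a))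
    (φ' := fun y u ↦ u * -a * (1 + y * u) ^ (-a - 1)) (Ioi_mem_nhds hx)
    (intervalIntegrable_rpow_mul_one_sub_rpow hb (sub_pos.2 hbc)) ?_ ?_ ?_
  · refine h.congr_deriv ?_
    rw [eulerIntegral, ← intervalIntegral.integral_const_mul]
    refine intervalIntegral.integral_congr_Ioo_of_le zero_le_one fun u hu ↦ ?_
    simp only [eulerIntegrand]
    rw [add_sub_add_right_eq_sub, add_sub_right_comm b, rpow_add_one hu.1.ne', neg_add']
    ring
  all_goals rw [uIcc_of_le zero_le_one]
  · exact fun y hy ↦ (continuousOn_one_add_mul_rpow (-a)).comp (f := fun u ↦ (y, u))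
      (by fun_prop) fun u hu ↦ ⟨hy, hu⟩
  · exact ContinuousOn.mul (by fun_prop) (continuousOn_one_add_mul_rpow (-a - 1))
  · exact fun y hy u hu ↦ hasDerivAt_one_add_mul_rpow (-a) (one_add_mul_pos hy hu)

theorem hasDerivAt_rpow_mul_one_sub_rpow_mul (hx : -1 < x) {u : ℝ} (hu : u ∈ Ioo (0 : ℝ) 1) :
    HasDerivAt (fun u ↦ u ^ b * (1 - u) ^ (c - b) * (1 + x * u) ^ (-a - 1))
      ((a + 1) * x * (1 + x) * eulerIntegrand (a + 1 + 1) (b + 1 + 1) (c + 1 + 1) x u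
        - (c + (a + b + 1) * x) * eulerIntegrand (a + 1) (b + 1) (c + 1) x u
        + b * eulerIntegrand a b c x u) u := by
  have hu0 : 0 < u := hu.1
  have hu1 : 0 < 1 - u := sub_pos.2 hu.2
  have hy : 1 + x * u ≠ 0 := (one_add_mul_pos hx (Ioo_subset_Icc_self hu)).ne'
  have hpow (p : ℝ) : (1 + x * u) ^ p = (1 + x * u) ^ (p - 1) * (1 + x * u) := by
    rw [← rpow_add_one hy, sub_add_cancel]
  have d₀ := hasDerivAt_rpow_const (p := b) (.inl hu0.ne')
  have d₁ := ((hasDerivAt_id u).const_sub 1).rpow_const (p := c - b) (.inl hu1.ne')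
  have d₂ := (((hasDerivAt_id u).const_mul x).const_add 1).rpow_const (p := -a - 1) (.inl hy)
  refine ((d₀.mul d₁).mul d₂).congr_deriv ?_
  simp only [eulerIntegrand, id, Pi.mul_apply, add_sub_add_right_eq_sub, add_sub_cancel_right]
  rw [show -(a + 1 + 1) = -a - 1 - 1 by ring, show -(a + 1) = -a - 1 by ring,
    rpow_add_one hu0.ne', rpow_sub_one hu0.ne', rpow_sub_one hu1.ne',
    hpow (-a), hpow (-a - 1)]
  field_simp
  ring

theorem eulerIntegral_contiguous (hb : 0 < b) (hbc : b < c) (hx : -1 < x) :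
    (a + 1) * x * (1 + x) * eulerIntegral (a + 1 + 1) (b + 1 + 1) (c + 1 + 1) x
      - (c + (a + b + 1) * x) * eulerIntegral (a + 1) (b + 1) (c + 1) x
      + b * eulerIntegral a b c x = 0 := by
  have hcb : 0 < c - b := sub_pos.2 hbc
  have hcont : ContinuousOn (fun u ↦ u ^ b * (1 - u) ^ (c - b) * (1 + x * u) ^ (-a - 1))
      (Icc 0 1) := by
    refine (ContinuousOn.mul ?_ ?_).mul ?_
    · exact continuousOn_id.rpow_const fun _ _ ↦ .inr hb.le
    · exact ContinuousOn.rpow_const (by fun_prop) fun _ _ ↦ .inr hcb.le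
    · exact ContinuousOn.rpow_const (by fun_prop) fun u hu ↦ .inl (one_add_mul_pos hx hu).ne'
  have i₀ := intervalIntegrable_eulerIntegrand (a := a) hb hbc hx
  have i₁ := intervalIntegrable_eulerIntegrand (a := a + 1) (b := b + 1) (c := c + 1)
    (by linarith) (by linarith) hx
  have i₂ := intervalIntegrable_eulerIntegrand (a := a + 1 + 1) (b := b + 1 + 1) (c := c + 1 + 1)
    (by linarith) (by linarith) hx
  have h := intervalIntegral.integral_eq_sub_of_hasDerivAt_of_le zero_le_one hcont
    (fun u hu ↦ hasDerivAt_rpow_mul_one_sub_rpow_mul hx hu)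
    (((i₂.const_mul _).sub (i₁.const_mul _)).add (i₀.const_mul _))
  rw [intervalIntegral.integral_add ((i₂.const_mul _).sub (i₁.const_mul _)) (i₀.const_mul _),
    intervalIntegral.integral_sub (i₂.const_mul _) (i₁.const_mul _)] at h
  simpa [eulerIntegral, zero_rpow hb.ne', zero_rpow hcb.ne'] using h

theorem deriv_eulerIntegral_eventuallyEq (hb : 0 < b) (hbc : b < c) (hx : -1 < x) :
    deriv (eulerIntegral a b c) =ᶠ[𝓝 x]
      fun y ↦ -a * eulerIntegral (a + 1) (b + 1) (c + 1) y := by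
  filter_upwards [Ioi_mem_nhds hx] with y hy using (hasDerivAt_eulerIntegral hb hbc hy).deriv

theorem hasDerivAt_deriv_eulerIntegral (hb : 0 < b) (hbc : b < c) (hx : -1 < x) :
    HasDerivAt (deriv (eulerIntegral a b c))
      (a * (a + 1) * eulerIntegral (a + 1 + 1) (b + 1 + 1) (c + 1 + 1) x) x := by
  have h := (hasDerivAt_eulerIntegral (a := a + 1) (b := b + 1) (c := c + 1) (by linarith)
    (by linarith) hx).const_mul (-a)
  exact (h.congr_of_eventuallyEq (deriv_eulerIntegral_eventuallyEq hb hbc hx)).congr_deriv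
    (by ring)

theorem eulerIntegral_hypergeometric_equation (hb : 0 < b) (hbc : b < c) (hx : -1 < x) :
    x * (1 + x) * deriv (deriv (eulerIntegral a b c)) x
      + (c + (a + b + 1) * x) * deriv (eulerIntegral a b c) x
      + a * b * eulerIntegral a b c x = 0 := by
  rw [(hasDerivAt_deriv_eulerIntegral hb hbc hx).deriv, (hasDerivAt_eulerIntegral hb hbc hx).deriv]
  linear_combination a * eulerIntegral_contiguous (a := a) hb hbc hx

end Euler

/-- Prepending the letter `σ` to a hyperlogarithm: if `f x = Hlog(x, w)` then
`hlogCons σ f x = Hlog(x, [σ, w])`. -/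
noncomputable def hlogCons (σ : ℝ) (f : ℝ → ℝ) (x : ℝ) : ℝ :=
  ∫ t in (0 : ℝ)..x, f t / (t - σ)

theorem Bfun_eq_hlogCons (n : ℕ) : Bfun n = hlogCons (-1) (Afun n) := by
  funext x
  simp only [Bfun, hlogCons, sub_neg_eq_add, add_comm]

theorem Afun_succ_eq_hlogCons (n : ℕ) : Afun (n + 1) = hlogCons 0 (Bfun n) := by
  funext x
  simp only [Afun, hlogCons, Bfun, sub_zero]

section HlogCons

variable {σ x K : ℝ} {f : ℝ → ℝ} {n : ℕ}

theorem hlogCons_sub_sum {ι : Type*} {s : Finset ι} {g : ι → ℝ → ℝ} {k : ι → ℝ}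
    (hf : IntervalIntegrable (fun t ↦ f t / (t - σ)) volume 0 x)
    (hg : ∀ i ∈ s, IntervalIntegrable (fun t ↦ g i t / (t - σ)) volume 0 x) :
    hlogCons σ (fun t ↦ f t - ∑ i ∈ s, k i * g i t) x =
      hlogCons σ f x - ∑ i ∈ s, k i * hlogCons σ (g i) x := by
  simp only [hlogCons, sub_div, Finset.sum_div, mul_div_assoc]
  rw [intervalIntegral.integral_sub hf, intervalIntegral.integral_finsetSum]
  · simp only [intervalIntegral.integral_const_mul]
  · exact fun i hi ↦ (hg i hi).const_mul _
  · simpa only [Finset.sum_fn] using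
      IntervalIntegrable.sum s fun i hi ↦ (hg i hi).const_mul (k i)

theorem abs_hlogCons_le (hσ : σ ≤ -1) (hx : 0 ≤ x) (hK : 0 ≤ K)
    (hf : ∀ t ∈ Icc 0 x, |f t| ≤ K * t ^ n) : |hlogCons σ f x| ≤ K * x ^ (n + 1) := by
  have hbound : ∀ t ∈ uIoc 0 x, ‖f t / (t - σ)‖ ≤ K * x ^ n := by
    intro t ht
    rw [uIoc_of_le hx] at ht
    have ht0 : 0 < t := ht.1
    calc ‖f t / (t - σ)‖ = |f t| / (t - σ) := by
          rw [norm_eq_abs, abs_div, abs_of_pos (by linarith : 0 < t - σ)]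
      _ ≤ |f t| := div_le_self (abs_nonneg _) (by linarith)
      _ ≤ K * t ^ n := hf t (Ioc_subset_Icc_self ht)
      _ ≤ K * x ^ n := by gcongr; exact ht.2
  have h := intervalIntegral.norm_integral_le_of_norm_le_const hbound
  rwa [sub_zero, abs_of_nonneg hx, mul_assoc, ← pow_succ] at h

theorem abs_hlogCons_zero_le (hx : 0 ≤ x) (hf : ∀ t ∈ Icc 0 x, |f t| ≤ K * t ^ (n + 1)) :
    |hlogCons 0 f x| ≤ K / (n + 1) * x ^ (n + 1) := by
  have hbound : ∀ t ∈ Ioc 0 x, ‖f t / (t - 0)‖ ≤ K * t ^ n := by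
    intro t ht
    rw [sub_zero, norm_eq_abs, abs_div, abs_of_pos ht.1, div_le_iff₀ ht.1, mul_assoc, ← pow_succ]
    exact hf t (Ioc_subset_Icc_self ht)
  calc |hlogCons 0 f x| ≤ ∫ t in (0 : ℝ)..x, K * t ^ n :=
        intervalIntegral.norm_integral_le_of_norm_le hx (Eventually.of_forall hbound)
          (Continuous.intervalIntegrable (by fun_prop) _ _)
    _ = K / (n + 1) * x ^ (n + 1) := by
        rw [intervalIntegral.integral_const_mul, integral_pow, zero_pow n.succ_ne_zero, sub_zero]
        ring

theorem continuousOn_primitive_Ici (hf : ∀ x, 0 ≤ x → IntervalIntegrable f volume 0 x) :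
    ContinuousOn (fun x ↦ ∫ t in (0 : ℝ)..x, f t) (Ici 0) := by
  intro x hx
  have hx1 : (0 : ℝ) ≤ x + 1 := by linarith [mem_Ici.1 hx]
  have h := intervalIntegral.continuousOn_primitive_interval' (hf (x + 1) hx1) left_mem_uIcc
  rw [uIcc_of_le hx1] at h
  refine (h x ⟨hx, by linarith⟩).mono_of_mem_nhdsWithin ?_
  filter_upwards [self_mem_nhdsWithin, mem_nhdsWithin_of_mem_nhds (Iio_mem_nhds (lt_add_one x))]
    with y hy0 hy1 using ⟨hy0, hy1.le⟩

theorem intervalIntegrable_div_sub (hσ : σ < 0) (hf : ContinuousOn f (Ici 0)) (hx : 0 ≤ x) :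
    IntervalIntegrable (fun t ↦ f t / (t - σ)) volume 0 x := by
  refine ContinuousOn.intervalIntegrable (ContinuousOn.div ?_ (by fun_prop) ?_)
  · exact hf.mono (uIcc_of_le hx ▸ Icc_subset_Ici_self)
  · intro t ht
    rw [uIcc_of_le hx] at ht
    linarith [ht.1]

theorem continuousOn_hlogCons (hσ : σ < 0) (hf : ContinuousOn f (Ici 0)) :
    ContinuousOn (hlogCons σ f) (Ici 0) :=
  continuousOn_primitive_Ici fun _ hx ↦ intervalIntegrable_div_sub hσ hf hx

theorem exists_forall_Icc_abs_le (hf : ContinuousOn f (Ici 0)) (x : ℝ) :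
    ∃ C, 0 ≤ C ∧ ∀ t ∈ Icc 0 x, |f t| ≤ C := by
  obtain ⟨C, hC⟩ := isCompact_Icc.exists_bound_of_continuousOn
    (hf.mono (Icc_subset_Ici_self : Icc 0 x ⊆ Ici 0))
  exact ⟨max C 0, le_max_right _ _, fun t ht ↦ (hC t ht).trans (le_max_left _ _)⟩

theorem intervalIntegrable_hlogCons_div (hσ : σ ≤ -1) (hf : ContinuousOn f (Ici 0)) (hx : 0 ≤ x) :
    IntervalIntegrable (fun t ↦ hlogCons σ f t / (t - 0)) volume 0 x := by
  obtain ⟨C, hC, hbound⟩ := exists_forall_Icc_abs_le hf x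
  have hcont : ContinuousOn (fun t ↦ hlogCons σ f t / (t - 0)) (Ioc 0 x) :=
    ((continuousOn_hlogCons (by linarith) hf).mono fun t ht ↦ ht.1.le).div (by fun_prop)
      fun t ht ↦ by simpa using ht.1.ne'
  rw [intervalIntegrable_iff_integrableOn_Ioc_of_le hx]
  refine .of_bound measure_Ioc_lt_top (hcont.aestronglyMeasurable measurableSet_Ioc) C ?_
  filter_upwards [ae_restrict_mem measurableSet_Ioc] with t ht
  rw [sub_zero, norm_eq_abs, abs_div, abs_of_pos ht.1, div_le_iff₀ ht.1]
  simpa using abs_hlogCons_le (n := 0) hσ ht.1.le hC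
    fun s hs ↦ by simpa using hbound s ⟨hs.1, hs.2.trans ht.2⟩

theorem continuousOn_hlogCons_zero_hlogCons (hσ : σ ≤ -1) (hf : ContinuousOn f (Ici 0)) :
    ContinuousOn (hlogCons 0 (hlogCons σ f)) (Ici 0) :=
  continuousOn_primitive_Ici fun _ hx ↦ intervalIntegrable_hlogCons_div hσ hf hx

theorem abs_iterate_hlogCons_le {c C : ℝ} {f : ℕ → ℝ → ℝ} (hσ : σ ≤ -1) (hC : 0 ≤ C)
    (h₀ : ∀ t ∈ Icc 0 x, |f 0 t| ≤ C)
    (hf : ∀ n, ∀ t, 0 ≤ t → f (n + 1) t = c * hlogCons 0 (hlogCons σ (f n)) t) (n : ℕ) :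
    ∀ t ∈ Icc 0 x, |f n t| ≤ C * |c| ^ n / n.factorial * t ^ n := by
  induction n with
  | zero => simpa using h₀
  | succ n ih =>
    intro t ht
    have hstep : ∀ s ∈ Icc 0 t, |hlogCons σ (f n) s| ≤
        C * |c| ^ n / n.factorial * s ^ (n + 1) := fun s hs ↦
      abs_hlogCons_le hσ hs.1 (by positivity) fun r hr ↦
        ih r ⟨hr.1, hr.2.trans (hs.2.trans ht.2)⟩
    calc |f (n + 1) t| = |c| * |hlogCons 0 (hlogCons σ (f n)) t| := by rw [hf n t ht.1, abs_mul]
      _ ≤ |c| * (C * |c| ^ n / n.factorial / (n + 1) * t ^ (n + 1)) := by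
          gcongr
          exact abs_hlogCons_zero_le ht.1 hstep
      _ = C * |c| ^ (n + 1) / (n + 1).factorial * t ^ (n + 1) := by
          rw [Nat.factorial_succ, Nat.cast_mul, Nat.cast_succ]
          field_simp
          ring

end HlogCons

section Series

variable {x c : ℝ} {F : ℝ → ℝ}

theorem continuousOn_Afun : ∀ n, ContinuousOn (Afun n) (Ici 0)
  | 0 => continuousOn_const
  | n + 1 => by
    rw [Afun_succ_eq_hlogCons, Bfun_eq_hlogCons]
    exact continuousOn_hlogCons_zero_hlogCons le_rfl (continuousOn_Afun n)

theorem abs_Afun_le (hx : 0 ≤ x) (n : ℕ) : |Afun n x| ≤ x ^ n / n.factorial := by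
  have h := abs_iterate_hlogCons_le (c := 1) (f := Afun) le_rfl zero_le_one
    (fun t _ ↦ by simp [Afun])
    (fun n t _ ↦ by rw [Afun_succ_eq_hlogCons, Bfun_eq_hlogCons, one_mul]) n x (right_mem_Icc.2 hx)
  rwa [abs_one, one_pow, mul_one, one_div_mul_eq_div] at h

theorem abs_Bfun_le (hx : 0 ≤ x) (n : ℕ) : |Bfun n x| ≤ x ^ (n + 1) / n.factorial := by
  rw [Bfun_eq_hlogCons, ← one_div_mul_eq_div]
  refine abs_hlogCons_le le_rfl hx (by positivity) fun t ht ↦ ?_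
  rw [one_div_mul_eq_div]
  exact abs_Afun_le ht.1 n

theorem summable_abs_pow_mul_Bfun (c : ℝ) (hx : 0 ≤ x) :
    Summable fun n ↦ |c ^ n * Bfun n x| := by
  refine .of_nonneg_of_le (fun _ ↦ abs_nonneg _) (fun n ↦ ?_)
    ((summable_pow_div_factorial (|c| * x)).mul_left x)
  calc |c ^ n * Bfun n x| ≤ |c| ^ n * (x ^ (n + 1) / n.factorial) := by
        rw [abs_mul, abs_pow]
        gcongr
        exact abs_Bfun_le hx n
    _ = x * ((|c| * x) ^ n / n.factorial) := by ring

/-- The error of the `n`-th partial sum of `∑ cⁱ Aᵢ` as an approximation to `F`. -/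
noncomputable def seriesRemainder (c : ℝ) (F : ℝ → ℝ) (n : ℕ) (x : ℝ) : ℝ :=
  F x - ∑ i ∈ Finset.range n, c ^ i * Afun i x

theorem hlogCons_seriesRemainder (hF : ContinuousOn F (Ici 0)) (hx : 0 ≤ x) (n : ℕ) :
    hlogCons (-1) (seriesRemainder c F n) x =
      hlogCons (-1) F x - ∑ i ∈ Finset.range n, c ^ i * Bfun i x := by
  simp only [Bfun_eq_hlogCons]
  exact hlogCons_sub_sum (intervalIntegrable_div_sub (by norm_num) hF hx)
    fun i _ ↦ intervalIntegrable_div_sub (by norm_num) (continuousOn_Afun i) hx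

theorem seriesRemainder_succ (hF : ContinuousOn F (Ici 0))
    (hfix : ∀ t, 0 ≤ t → F t = 1 + c * hlogCons 0 (hlogCons (-1) F) t) (hx : 0 ≤ x) (n : ℕ) :
    seriesRemainder c F (n + 1) x =
      c * hlogCons 0 (hlogCons (-1) (seriesRemainder c F n)) x := by
  have hcongr : hlogCons 0 (hlogCons (-1) (seriesRemainder c F n)) x =
      hlogCons 0 (fun t ↦ hlogCons (-1) F t - ∑ i ∈ Finset.range n, c ^ i * Bfun i t) x := by
    refine intervalIntegral.integral_congr fun t ht ↦ ?_
    rw [uIcc_of_le hx] at ht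
    simp only [hlogCons_seriesRemainder hF ht.1]
  have hB (i : ℕ) : IntervalIntegrable (fun t ↦ Bfun i t / (t - 0)) volume 0 x := by
    rw [Bfun_eq_hlogCons]
    exact intervalIntegrable_hlogCons_div le_rfl (continuousOn_Afun i) hx
  rw [hcongr, hlogCons_sub_sum (intervalIntegrable_hlogCons_div le_rfl hF hx) fun i _ ↦ hB i,
    seriesRemainder, Finset.sum_range_succ', hfix x hx]
  simp only [← Afun_succ_eq_hlogCons, Afun, pow_succ', mul_sub, Finset.mul_sum, mul_assoc]
  ring

theorem tendsto_hlogCons_seriesRemainder (hF : ContinuousOn F (Ici 0))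
    (hfix : ∀ t, 0 ≤ t → F t = 1 + c * hlogCons 0 (hlogCons (-1) F) t) (hx : 0 ≤ x) :
    Tendsto (fun n ↦ hlogCons (-1) (seriesRemainder c F n) x) atTop (𝓝 0) := by
  obtain ⟨C, hC, hbound⟩ := exists_forall_Icc_abs_le hF x
  have hlim := (FloorSemiring.tendsto_pow_div_factorial_atTop (|c| * x)).const_mul (C * x)
  rw [mul_zero] at hlim
  refine squeeze_zero_norm (fun n ↦ ?_) hlim
  have hrem := abs_iterate_hlogCons_le (f := seriesRemainder c F) le_rfl hC
    (by simpa [seriesRemainder] using hbound)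
    (fun n t ht ↦ seriesRemainder_succ hF hfix ht n) n
  calc ‖hlogCons (-1) (seriesRemainder c F n) x‖
      ≤ C * |c| ^ n / n.factorial * x ^ (n + 1) :=
        abs_hlogCons_le le_rfl hx (by positivity) hrem
    _ = C * x * ((|c| * x) ^ n / n.factorial) := by ring

theorem hasSum_pow_mul_Bfun (hF : ContinuousOn F (Ici 0))
    (hfix : ∀ t, 0 ≤ t → F t = 1 + c * hlogCons 0 (hlogCons (-1) F) t) (hx : 0 ≤ x) :
    HasSum (fun n ↦ c ^ n * Bfun n x) (hlogCons (-1) F x) := by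
  rw [(summable_abs_pow_mul_Bfun c hx).of_abs.hasSum_iff_tendsto_nat]
  have h := (tendsto_hlogCons_seriesRemainder hF hfix hx).const_sub (hlogCons (-1) F x)
  simpa only [hlogCons_seriesRemainder hF hx, sub_sub_cancel, sub_zero] using h

end Series

section Hypergeometric

variable {α x : ℝ}

theorem Hhyp_eq_eulerIntegral (α : ℝ) :
    Hhyp α = fun x ↦
      1 / (Real.Gamma (1 - α) * Real.Gamma (1 + α)) * eulerIntegral (1 + α) (1 - α) 2 x := by
  funext x
  rw [Hhyp, eulerIntegral]
  congr! 3 with u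
  rw [eulerIntegrand]
  ring_nf

theorem Hhyp_zero (hα : α ∈ Ioo (-1 : ℝ) 1) : Hhyp α 0 = 1 := by
  have h₁ : 0 < 1 - α := by linarith [hα.2]
  have h₂ : 0 < 1 + α := by linarith [hα.1]
  have hΓ₁ := (Real.Gamma_pos_of_pos h₁).ne'
  have hΓ₂ := (Real.Gamma_pos_of_pos h₂).ne'
  simp only [Hhyp_eq_eulerIntegral, eulerIntegral_zero h₁ (show 1 - α < 2 by linarith)]
  rw [ProbabilityTheory.beta,
    show 2 - (1 - α) = 1 + α by ring, show 1 - α + (1 + α) = 2 by ring, Real.Gamma_two]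
  field_simp

theorem differentiableAt_Hhyp (hα : α ∈ Ioo (-1 : ℝ) 1) (hx : -1 < x) :
    DifferentiableAt ℝ (Hhyp α) x := by
  rw [Hhyp_eq_eulerIntegral]
  exact (hasDerivAt_eulerIntegral (by linarith [hα.2]) (by linarith [hα.1])
    hx).differentiableAt.const_mul _

theorem deriv_Hhyp (α : ℝ) :
    deriv (Hhyp α) = fun x ↦ 1 / (Real.Gamma (1 - α) * Real.Gamma (1 + α)) *
      deriv (eulerIntegral (1 + α) (1 - α) 2) x := by
  funext x
  rw [Hhyp_eq_eulerIntegral, deriv_const_mul_field]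

theorem differentiableAt_deriv_Hhyp (hα : α ∈ Ioo (-1 : ℝ) 1) (hx : -1 < x) :
    DifferentiableAt ℝ (deriv (Hhyp α)) x := by
  rw [deriv_Hhyp]
  exact (hasDerivAt_deriv_eulerIntegral (by linarith [hα.2]) (by linarith [hα.1])
    hx).differentiableAt.const_mul _

theorem Hhyp_hypergeometric_equation (hα : α ∈ Ioo (-1 : ℝ) 1) (hx : -1 < x) :
    x * (1 + x) * deriv (deriv (Hhyp α)) x + (2 + 3 * x) * deriv (Hhyp α) x
      + (1 - α ^ 2) * Hhyp α x = 0 := by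
  have h := eulerIntegral_hypergeometric_equation (a := 1 + α) (b := 1 - α) (c := 2)
    (by linarith [hα.2]) (by linarith [hα.1]) hx
  rw [deriv_Hhyp, deriv_const_mul_field, Hhyp_eq_eulerIntegral]
  linear_combination 1 / (Real.Gamma (1 - α) * Real.Gamma (1 + α)) * h

theorem hasDerivAt_mul_Hhyp (hα : α ∈ Ioo (-1 : ℝ) 1) (hx : -1 < x) :
    HasDerivAt (fun y ↦ y * Hhyp α y) (Hhyp α x + x * deriv (Hhyp α) x) x :=
  ((hasDerivAt_id x).mul (differentiableAt_Hhyp hα hx).hasDerivAt).congr_deriv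
    (by rw [id, one_mul])

/-- The hypergeometric function `₂F₁(α, -α; 1; -x)`, written through `Hhyp` as `(1 + x)(x H(x))'`;
it is the sum of `∑ α²ⁿ Aₙ(x)`. -/
noncomputable def Fhyp (α x : ℝ) : ℝ :=
  (1 + x) * (Hhyp α x + x * deriv (Hhyp α) x)

theorem Fhyp_zero (hα : α ∈ Ioo (-1 : ℝ) 1) : Fhyp α 0 = 1 := by
  simp [Fhyp, Hhyp_zero hα]

theorem hasDerivAt_Fhyp (hα : α ∈ Ioo (-1 : ℝ) 1) (hx : -1 < x) :
    HasDerivAt (Fhyp α) (α ^ 2 * Hhyp α x) x := by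
  have h₁ := (differentiableAt_Hhyp hα hx).hasDerivAt
  have h₂ := (differentiableAt_deriv_Hhyp hα hx).hasDerivAt
  refine (((hasDerivAt_id x).const_add 1).mul (h₁.add ((hasDerivAt_id x).mul h₂))).congr_deriv ?_
  simp only [id, Pi.add_apply, Pi.mul_apply]
  linear_combination Hhyp_hypergeometric_equation hα hx

theorem continuousOn_Hhyp (hα : α ∈ Ioo (-1 : ℝ) 1) : ContinuousOn (Hhyp α) (Ici 0) :=
  fun _ hx ↦ (differentiableAt_Hhyp hα
    (neg_one_lt_zero.trans_le hx)).continuousAt.continuousWithinAt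

theorem continuousOn_Fhyp (hα : α ∈ Ioo (-1 : ℝ) 1) : ContinuousOn (Fhyp α) (Ici 0) :=
  fun _ hx ↦ (hasDerivAt_Fhyp hα
    (neg_one_lt_zero.trans_le hx)).continuousAt.continuousWithinAt

theorem hlogCons_neg_one_Fhyp (hα : α ∈ Ioo (-1 : ℝ) 1) (hx : 0 ≤ x) :
    hlogCons (-1) (Fhyp α) x = x * Hhyp α x := by
  rw [hlogCons, intervalIntegral.integral_eq_sub_of_hasDerivAt (f := fun t ↦ t * Hhyp α t) ?_
    (intervalIntegrable_div_sub neg_one_lt_zero (continuousOn_Fhyp hα) hx), zero_mul, sub_zero]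
  intro t ht
  rw [uIcc_of_le hx] at ht
  have ht1 : 0 < 1 + t := by linarith [ht.1]
  refine (hasDerivAt_mul_Hhyp hα (by linarith)).congr_deriv ?_
  rw [Fhyp, sub_neg_eq_add, add_comm t, mul_div_cancel_left₀ _ ht1.ne']

theorem hlogCons_zero_hlogCons_neg_one_Fhyp (hα : α ∈ Ioo (-1 : ℝ) 1) (hx : 0 ≤ x) :
    hlogCons 0 (hlogCons (-1) (Fhyp α)) x = ∫ t in (0 : ℝ)..x, Hhyp α t := by
  refine intervalIntegral.integral_congr_Ioo_of_le hx fun t ht ↦ ?_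
  rw [hlogCons_neg_one_Fhyp hα ht.1.le, sub_zero, mul_div_cancel_left₀ _ ht.1.ne']

theorem Fhyp_eq_one_add_hlogCons (hα : α ∈ Ioo (-1 : ℝ) 1) (hx : 0 ≤ x) :
    Fhyp α x = 1 + α ^ 2 * hlogCons 0 (hlogCons (-1) (Fhyp α)) x := by
  have hderiv : ∀ t ∈ uIcc 0 x, HasDerivAt (Fhyp α) (α ^ 2 * Hhyp α t) t := fun t ht ↦
    hasDerivAt_Fhyp hα (neg_one_lt_zero.trans_le (uIcc_of_le hx ▸ ht).1)
  have hint : IntervalIntegrable (Hhyp α) volume 0 x :=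
    ((continuousOn_Hhyp hα).mono (uIcc_of_le hx ▸ Icc_subset_Ici_self)).intervalIntegrable
  rw [hlogCons_zero_hlogCons_neg_one_Fhyp hα hx, ← intervalIntegral.integral_const_mul,
    intervalIntegral.integral_eq_sub_of_hasDerivAt hderiv (hint.const_mul _), Fhyp_zero hα,
    add_sub_cancel]

end Hypergeometric

theorem hyperlog_series_B_general (α : ℝ) (hα : α ∈ Set.Ioo (-1 : ℝ) 1) (x : ℝ) (hx : 0 ≤ x) :
    Summable (fun n : ℕ => |α ^ (2 * n) * Bfun n x|) ∧
    ∑' n : ℕ, α ^ (2 * n) * Bfun n x = x * Hhyp α x := by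
  have hsum : HasSum (fun n ↦ (α ^ 2) ^ n * Bfun n x) (hlogCons (-1) (Fhyp α) x) :=
    hasSum_pow_mul_Bfun (continuousOn_Fhyp hα) (fun _ ht ↦ Fhyp_eq_one_add_hlogCons hα ht) hx
  simp only [pow_mul]
  exact ⟨summable_abs_pow_mul_Bfun (α ^ 2) hx,
    hsum.tsum_eq.trans (hlogCons_neg_one_Fhyp hα hx)⟩

theorem hyperlog_series_B (α : ℝ) (hα : α ∈ Set.Ioo (0:ℝ) 1) (x : ℝ) (hx : 0 ≤ x) :
    Summable (fun n : ℕ => |α ^ (2*n) * Bfun n x|) ∧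
    ∑' n : ℕ, α ^ (2*n) * Bfun n x = x * Hhyp α x :=
  hyperlog_series_B_general α ⟨neg_one_lt_zero.trans hα.1, hα.2⟩ x hx
end
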